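/- Let θ ≈ 1.3489795 satisfy γ₁([−θ/2, θ/2]) = 1/2. If V is a closed convex set in ℝⁿ with 0 in its interior and γₙ(V) ≥ 1/2, then α(Bₙ, V) ≤ θ^{−1}, i.e., for every lattice L in ℝⁿ, μ(L, V) ≤ θ^{−1} λₙ(L, Bₙ). -/

import Mathlib

/-!
The heart of the matter is that a compact convex set `V` in `ℝⁿ` with Gaussian measure greater than
`1 / 2` meets every coset of the group generated by a spanning set of vectors of norm at most `θ`
(`meets_coset`). This is proved by induction on the dimension. Pick a nonzero generator `u` and
write `ℝⁿ = ℝ u ⊕ H` with `H` orthogonal to `u`. Let `V'` be the set of `y ∈ H` such that the line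
`y + ℝ u` meets `V` in a segment of length at least `‖u‖`. If a coset of the projected group meets
`V'`, then adding an integer multiple of `u` to a lift gives a point of `V`. Projection does not
increase norms, so the induction goes on provided that `V'` again has measure greater than `1 / 2`.

That is `shiftProj_measure`. Let `a r` be the measure of the set of `y` whose line meets `V` in a
segment of length at least `2 * r`. A segment of given length has largest Gaussian measure when
centred at the origin, hence `γ V ≤ ∫ a |r| dγ₁(r)` by Fubini. Suppose that `a (θ / 2) ≤ 1 / 2`.
Midpoints of the sets for `θ / 2 - q` and `θ / 2 + q` lie in the set for `θ / 2`, so the midpoint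
case of Ehrhard's inequality (`ehrhard_half`: if `γ A + γ B > 1` then `γ ((A + B) / 2) > 1 / 2`)
gives `a (θ / 2 - q) + a (θ / 2 + q) ≤ 1`. As `[-θ / 2, θ / 2]` has measure `1 / 2` and the density
decreases away from the origin, the integral is at most `1 / 2` (`quartile_integral_le`), a
contradiction.

Ehrhard's inequality is proved by Borell's argument. The sets are replaced by continuous
approximations of their indicators, which evolve by the heat equation. Composed with the inverse
`Q` of the normal distribution function, the evolutions solve `∂ₜ u = ½ (Δ u - u |∇ u|²)`, and for
this equation a maximum principle (`borell_max_principle`) propagates the midpoint inequality from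
time `0` to time `1`, where the solutions at the origin are the Gaussian integrals.

For a closed convex `V` of measure at least `1 / 2` with `0` in its interior, a dilation
`(1 + δ) • V` contains a compact convex set of measure greater than `1 / 2`. The covering bound
follows on letting `δ` tend to `0`.
-/

open MeasureTheory Real

/-- Standard Gaussian measure on ℝⁿ (as Euclidean space). -/
noncomputable def stdGaussian (n : ℕ) : Measure (EuclideanSpace ℝ (Fin n)) :=
  volume.withDensity fun x => ENNReal.ofReal ((2 * π) ^ (-(n : ℝ) / 2) * Real.exp (-‖x‖ ^ 2 / 2))

/-- Standard Gaussian measure on ℝ. -/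
noncomputable def gaussian1 : Measure ℝ :=
  volume.withDensity fun x => ENNReal.ofReal ((2 * π) ^ (-(1 : ℝ) / 2) * Real.exp (-x ^ 2 / 2))

open Pointwise

/-- The n-th minimum of a lattice `L` with respect to a set `U`. -/
noncomputable def nthMin (n : ℕ) (L : AddSubgroup (EuclideanSpace ℝ (Fin n)))
    (U : Set (EuclideanSpace ℝ (Fin n))) : ℝ :=
  sInf {r : ℝ | 0 < r ∧
    Module.finrank ℝ (Submodule.span ℝ ((L : Set (EuclideanSpace ℝ (Fin n))) ∩ r • U)) = n}

/-- The covering radius of a lattice `L` with respect to a set `V`. -/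
noncomputable def covRad (n : ℕ) (L : AddSubgroup (EuclideanSpace ℝ (Fin n)))
    (V : Set (EuclideanSpace ℝ (Fin n))) : ℝ :=
  sInf {r : ℝ | 0 < r ∧ (L : Set (EuclideanSpace ℝ (Fin n))) + r • V = Set.univ}

/-! ### The normal distribution function and its inverse -/

/-- The standard Gaussian density on the line. -/
noncomputable def gphi (x : ℝ) : ℝ := (2 * π) ^ (-(1 : ℝ) / 2) * Real.exp (-x ^ 2 / 2)

/-- The standard normal distribution function. -/
noncomputable def Phi (x : ℝ) : ℝ := ∫ t in Set.Iic x, gphi t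

lemma gphi_pos (x : ℝ) : 0 < gphi x := by unfold gphi; positivity

lemma gphi_cont : Continuous gphi := by unfold gphi; fun_prop

lemma gphi_neg (x : ℝ) : gphi (-x) = gphi x := by simp [gphi]

lemma gphi_eq_pdf : gphi = ProbabilityTheory.gaussianPDFReal 0 1 := by
  ext x
  simp only [gphi, ProbabilityTheory.gaussianPDFReal, NNReal.coe_one, mul_one, sub_zero]
  congr 1
  rw [Real.sqrt_eq_rpow, ← Real.rpow_neg (by positivity)]
  norm_num

lemma gaussian1_eq : gaussian1 = ProbabilityTheory.gaussianReal 0 1 := by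
  rw [ProbabilityTheory.gaussianReal_of_var_ne_zero _ one_ne_zero]
  unfold gaussian1 ProbabilityTheory.gaussianPDF
  rw [← gphi_eq_pdf]; rfl

instance : IsProbabilityMeasure gaussian1 := by rw [gaussian1_eq]; infer_instance

lemma gphi_integrable : Integrable gphi := by
  rw [gphi_eq_pdf]; exact ProbabilityTheory.integrable_gaussianPDFReal 0 1

lemma gphi_hasDerivAt (x : ℝ) : HasDerivAt gphi (-x * gphi x) x := by
  unfold gphi
  have h : HasDerivAt (fun x : ℝ => -x ^ 2 / 2) (-x) x := by
    have := ((hasDerivAt_pow 2 x).neg).div_const 2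
    refine this.congr_deriv ?_
    simp; ring
  refine (h.exp.const_mul _).congr_deriv ?_
  ring

/-- `gphi` decreases with the distance to the origin. -/
lemma gphi_le {x y : ℝ} (h : |x| ≤ |y|) : gphi y ≤ gphi x := by
  unfold gphi
  have := sq_le_sq.2 h
  gcongr

lemma gaussian1_real (s : Set ℝ) :
    gaussian1.real s = ∫ t in s, gphi t := by
  rw [gaussian1_eq, measureReal_def,
    ProbabilityTheory.gaussianReal_apply_eq_integral _ one_ne_zero, gphi_eq_pdf,
    ENNReal.toReal_ofReal]
  exact integral_nonneg fun x => ProbabilityTheory.gaussianPDFReal_nonneg _ _ _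

lemma Phi_hasDerivAt (x : ℝ) : HasDerivAt Phi (gphi x) x := by
  have h1 : Phi = fun y => Phi 0 + ∫ t in (0 : ℝ)..y, gphi t := by
    ext y
    rw [← intervalIntegral.integral_Iic_sub_Iic gphi_integrable.integrableOn
      gphi_integrable.integrableOn]
    unfold Phi; ring
  rw [h1]
  exact (intervalIntegral.integral_hasDerivAt_right gphi_integrable.intervalIntegrable
    (gphi_cont.stronglyMeasurableAtFilter _ _) gphi_cont.continuousAt).const_add _

lemma Phi_strictMono : StrictMono Phi :=
  strictMono_of_hasDerivAt_pos (fun x => Phi_hasDerivAt x) (fun x => gphi_pos x)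

lemma Phi_cont : Continuous Phi :=
  continuous_iff_continuousAt.2 fun x => (Phi_hasDerivAt x).continuousAt

lemma Phi_eq_cdf (x : ℝ) : Phi x = ProbabilityTheory.cdf gaussian1 x := by
  rw [ProbabilityTheory.cdf_eq_real, gaussian1_real, Phi]

lemma Phi_atBot : Filter.Tendsto Phi Filter.atBot (nhds 0) := by
  rw [funext Phi_eq_cdf]; exact ProbabilityTheory.tendsto_cdf_atBot _

lemma Phi_atTop : Filter.Tendsto Phi Filter.atTop (nhds 1) := by
  rw [funext Phi_eq_cdf]; exact ProbabilityTheory.tendsto_cdf_atTop _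

lemma Phi_pos (x : ℝ) : 0 < Phi x :=
  lt_of_le_of_lt (Phi_strictMono.monotone.le_of_tendsto Phi_atBot (x - 1))
    (Phi_strictMono (by linarith))

lemma Phi_lt_one (x : ℝ) : Phi x < 1 :=
  lt_of_lt_of_le (Phi_strictMono (by linarith : x < x + 1))
    (Phi_strictMono.monotone.ge_of_tendsto Phi_atTop (x + 1))

lemma Phi_neg (x : ℝ) : Phi (-x) = 1 - Phi x := by
  have h : ∀ y, HasDerivAt (fun x => Phi (-x) + Phi x) 0 y := fun y => by
    have := ((Phi_hasDerivAt (-y)).comp y (hasDerivAt_neg y)).add (Phi_hasDerivAt y)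
    refine this.congr_deriv ?_
    rw [gphi_neg]; ring
  have hc : ∀ y z, Phi (-y) + Phi y = Phi (-z) + Phi z := fun y z =>
    is_const_of_deriv_eq_zero (fun y => (h y).differentiableAt) (fun y => (h y).deriv) y z
  have hl : Filter.Tendsto (fun x => Phi (-x) + Phi x) Filter.atTop (nhds (0 + 1)) :=
    (Phi_atBot.comp Filter.tendsto_neg_atTop_atBot).add Phi_atTop
  have hl' : Filter.Tendsto (fun y => Phi (-y) + Phi y) Filter.atTop
      (nhds (Phi (-x) + Phi x)) := by
    rw [funext fun y => hc y x]; exact tendsto_const_nhds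
  have := tendsto_nhds_unique hl hl'
  linarith

lemma Phi_zero : Phi 0 = 1 / 2 := by
  have := Phi_neg 0
  simp only [neg_zero] at this
  linarith

lemma Phi_surj {w : ℝ} (h0 : 0 < w) (h1 : w < 1) : ∃ x, Phi x = w := by
  obtain ⟨a, ha⟩ := (Phi_atBot.eventually (gt_mem_nhds h0)).exists
  obtain ⟨b, hb⟩ := (Phi_atTop.eventually (lt_mem_nhds h1)).exists
  exact mem_range_of_exists_le_of_exists_ge Phi_cont ⟨a, ha.le⟩ ⟨b, hb.le⟩

/-- The quantile function, inverse to `Phi` on `(0, 1)`; its values elsewhere are irrelevant. -/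
noncomputable def Q : ℝ → ℝ := Function.invFun Phi

lemma Q_Phi (x : ℝ) : Q (Phi x) = x :=
  Function.leftInverse_invFun Phi_strictMono.injective x

lemma Phi_Q {w : ℝ} (h0 : 0 < w) (h1 : w < 1) : Phi (Q w) = w := by
  obtain ⟨x, rfl⟩ := Phi_surj h0 h1
  rw [Q_Phi]

lemma Q_hasDerivAt {w : ℝ} (h0 : 0 < w) (h1 : w < 1) : HasDerivAt Q (gphi (Q w))⁻¹ w := by
  obtain ⟨x, rfl⟩ := Phi_surj h0 h1
  rw [Q_Phi]
  have hs : HasStrictDerivAt Phi (gphi x) x :=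
    hasStrictDerivAt_of_hasDerivAt_of_continuousAt
      (Filter.Eventually.of_forall fun y => Phi_hasDerivAt y) gphi_cont.continuousAt
  exact (hs.to_local_left_inverse (gphi_pos x).ne'
    (Filter.Eventually.of_forall Q_Phi)).hasDerivAt

lemma Q_lt_iff {w x : ℝ} (h0 : 0 < w) (h1 : w < 1) : x < Q w ↔ Phi x < w := by
  obtain ⟨y, rfl⟩ := Phi_surj h0 h1
  rw [Q_Phi, Phi_strictMono.lt_iff_lt]

lemma Q_le {v w : ℝ} (h0 : 0 < v) (hvw : v ≤ w) (h1 : w < 1) : Q v ≤ Q w := by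
  rw [← Phi_strictMono.le_iff_le, Phi_Q h0 (by linarith), Phi_Q (by linarith) h1]
  exact hvw

/-! ### The Gaussian measure and the heat evolution -/

/-- The density of `stdGaussian n`. -/
noncomputable def rho (n : ℕ) (x : EuclideanSpace ℝ (Fin n)) : ℝ :=
  (2 * π) ^ (-(n : ℝ) / 2) * Real.exp (-‖x‖ ^ 2 / 2)

lemma rho_pos (n : ℕ) (x : EuclideanSpace ℝ (Fin n)) : 0 < rho n x := by
  unfold rho; positivity

lemma rho_cont (n : ℕ) : Continuous (rho n) := by unfold rho; fun_prop

lemma stdGaussian_def (n : ℕ) :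
    stdGaussian n = volume.withDensity fun x => ENNReal.ofReal (rho n x) := rfl

lemma rho_integral (n : ℕ) : ∫ x, rho n x = 1 := by
  have h := GaussianFourier.integral_rexp_neg_mul_sq_norm (V := EuclideanSpace ℝ (Fin n))
    (b := 1 / 2) (by norm_num)
  have e : ∀ x : EuclideanSpace ℝ (Fin n), rho n x =
      (2 * π) ^ (-(n : ℝ) / 2) * Real.exp (-(1 / 2) * ‖x‖ ^ 2) := fun x => by
    unfold rho; congr 2; ring
  simp_rw [e]
  rw [integral_const_mul, h, finrank_euclideanSpace_fin,
    show π / (1 / 2) = 2 * π by ring, ← Real.rpow_add (by positivity)]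
  have : -(n : ℝ) / 2 + n / 2 = 0 := by ring
  rw [this, Real.rpow_zero]

lemma rho_integrable (n : ℕ) : Integrable (rho n) := by
  by_contra h
  have := integral_undef h
  rw [rho_integral] at this
  norm_num at this

instance (n : ℕ) : IsProbabilityMeasure (stdGaussian n) := by
  constructor
  rw [stdGaussian_def, withDensity_apply _ MeasurableSet.univ, Measure.restrict_univ,
    ← ofReal_integral_eq_lintegral_ofReal (rho_integrable n)
      (Filter.Eventually.of_forall fun x => (rho_pos n x).le), rho_integral]
  simp

lemma integral_stdGaussian (n : ℕ) (f : EuclideanSpace ℝ (Fin n) → ℝ) :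
    ∫ x, f x ∂(stdGaussian n) = ∫ x, f x * rho n x := by
  have : stdGaussian n = volume.withDensity fun x => ((rho n x).toNNReal : ENNReal) := rfl
  rw [this, integral_withDensity_eq_integral_smul]
  · refine integral_congr_ae (Filter.Eventually.of_forall fun x => ?_)
    simp only [NNReal.smul_def, Real.coe_toNNReal _ (rho_pos n x).le, smul_eq_mul]
    ring
  · exact (rho_cont n).measurable.real_toNNReal

/-- The heat evolution of `f`: its average against a centred Gaussian of variance `t`. -/
noncomputable def heat (n : ℕ) (f : EuclideanSpace ℝ (Fin n) → ℝ) (t : ℝ)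
    (x : EuclideanSpace ℝ (Fin n)) : ℝ :=
  ∫ z, f (x + √t • z) ∂(stdGaussian n)

lemma heat_integrable {n : ℕ} {f : EuclideanSpace ℝ (Fin n) → ℝ} (hf : Continuous f) {c : ℝ}
    (hb : ∀ x, |f x| ≤ c) (t : ℝ) (x : EuclideanSpace ℝ (Fin n)) :
    Integrable (fun z => f (x + √t • z)) (stdGaussian n) := by
  refine Integrable.of_bound (C := c) ?_ (Filter.Eventually.of_forall fun z => hb _)
  exact (by fun_prop : Continuous fun z => f (x + √t • z)).aestronglyMeasurable

lemma heat_cont {n : ℕ} {f : EuclideanSpace ℝ (Fin n) → ℝ} (hf : Continuous f) {c : ℝ}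
    (hb : ∀ x, |f x| ≤ c) :
    Continuous fun p : ℝ × EuclideanSpace ℝ (Fin n) => heat n f p.1 p.2 := by
  unfold heat
  refine continuous_of_dominated (bound := fun _ => c) ?_ ?_ ?_ ?_
  · exact fun p => (by fun_prop : Continuous fun z => f (p.2 + √p.1 • z)).aestronglyMeasurable
  · exact fun p => Filter.Eventually.of_forall fun z => hb _
  · exact integrable_const _
  · exact Filter.Eventually.of_forall fun z => by fun_prop

/-- The heat kernel. -/
noncomputable def hk (n : ℕ) (t : ℝ) (v : EuclideanSpace ℝ (Fin n)) : ℝ :=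
  (2 * π * t) ^ (-(n : ℝ) / 2) * Real.exp (-‖v‖ ^ 2 / (2 * t))

lemma heat_eq {n : ℕ} (f : EuclideanSpace ℝ (Fin n) → ℝ) {t : ℝ} (ht : 0 < t)
    (x : EuclideanSpace ℝ (Fin n)) : heat n f t x = ∫ y, f y * hk n t (y - x) := by
  unfold heat
  rw [integral_stdGaussian]
  rw [← integral_add_left_eq_self (fun y => f y * hk n t (y - x)) x]
  have hs : 0 < √t := Real.sqrt_pos.2 ht
  have h := Measure.integral_comp_smul_of_nonneg volume
    (fun z : EuclideanSpace ℝ (Fin n) => f (x + z) * hk n t z) (√t) (hR := hs.le)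
  simp only [add_sub_cancel_left]
  have h2 : ∫ z : EuclideanSpace ℝ (Fin n), f (x + z) * hk n t z =
      (√t) ^ n * ∫ z, f (x + √t • z) * hk n t (√t • z) := by
    rw [h, finrank_euclideanSpace_fin, smul_eq_mul, ← mul_assoc, mul_inv_cancel₀ (by positivity),
      one_mul]
  rw [h2, ← integral_const_mul]
  congr 1
  ext z
  have e1 : ‖√t • z‖ ^ 2 = t * ‖z‖ ^ 2 := by
    rw [norm_smul, mul_pow, Real.norm_eq_abs, sq_abs, Real.sq_sqrt ht.le]
  have e2 : (√t) ^ n * t ^ (-(n : ℝ) / 2) = 1 := by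
    rw [Real.sqrt_eq_rpow, ← Real.rpow_natCast, ← Real.rpow_mul ht.le, ← Real.rpow_add ht]
    rw [show (1 / 2 * (n : ℝ) + -n / 2) = 0 by ring, Real.rpow_zero]
  have e3 : -(t * ‖z‖ ^ 2) / (2 * t) = -‖z‖ ^ 2 / 2 := by field_simp
  unfold hk rho
  rw [e1, e3, Real.mul_rpow (by positivity) ht.le]
  linear_combination (-(f (x + √t • z) * (2 * π) ^ (-(n : ℝ) / 2) * rexp (-‖z‖ ^ 2 / 2))) * e2

/-- Differentiation under the integral sign against a compactly supported function. -/
lemma hasDerivAt_integral_compact {n : ℕ} {f : EuclideanSpace ℝ (Fin n) → ℝ} (hf : Continuous f)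
    (hc : HasCompactSupport f) {K K' : ℝ → EuclideanSpace ℝ (Fin n) → ℝ} {U : Set ℝ}
    (hU : IsOpen U) {r₀ : ℝ} (hr : r₀ ∈ U)
    (hd : ∀ r ∈ U, ∀ y, HasDerivAt (fun r => K r y) (K' r y) r)
    (hK' : ContinuousOn (Function.uncurry K') (U ×ˢ Set.univ))
    (hK : ∀ r ∈ U, Continuous (K r)) :
    HasDerivAt (fun r => ∫ y, f y * K r y) (∫ y, f y * K' r₀ y) r₀ := by
  obtain ⟨ε, hε, hεU⟩ := Metric.nhds_basis_closedBall.mem_iff.1 (hU.mem_nhds hr)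
  have hcomp : IsCompact (Metric.closedBall r₀ ε ×ˢ tsupport f) :=
    (isCompact_closedBall _ _).prod hc
  obtain ⟨C, hC⟩ := hcomp.exists_bound_of_continuousOn
    (hK'.mono (Set.prod_mono hεU (Set.subset_univ _)))
  have hK'c : Continuous (K' r₀) := by
    rw [← continuousOn_univ]
    exact hK'.comp (f := fun y => (r₀, y)) (by fun_prop) (fun y _ => ⟨hr, trivial⟩)
  refine (hasDerivAt_integral_of_dominated_loc_of_deriv_le (μ := volume) (F := fun r y => f y * K r y)
    (F' := fun r y => f y * K' r y) (x₀ := r₀) (s := Metric.closedBall r₀ ε)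
    (bound := fun y => |f y| * C) (Metric.closedBall_mem_nhds _ hε) ?_ ?_ ?_ ?_ ?_ ?_).2
  · filter_upwards [hU.mem_nhds hr] with r hrU
    exact (hf.mul (hK r hrU)).aestronglyMeasurable
  · exact (hf.mul (hK r₀ hr)).integrable_of_hasCompactSupport hc.mul_right
  · exact (hf.mul hK'c).aestronglyMeasurable
  · refine Filter.Eventually.of_forall fun y r hrb => ?_
    rw [norm_mul, Real.norm_eq_abs (f y)]
    by_cases hy : y ∈ tsupport f
    · exact mul_le_mul_of_nonneg_left (hC (r, y) ⟨hrb, hy⟩) (abs_nonneg _)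
    · rw [image_eq_zero_of_notMem_tsupport hy]; simp
  · exact (hf.abs.mul continuous_const).integrable_of_hasCompactSupport
      (hc.comp_left (g := fun s => |s| * C) (by simp))
  · exact Filter.Eventually.of_forall fun y r hrb => (hd r (hεU hrb) y).const_mul _

/-! ### The heat equation -/

/-- The `i`-th standard basis vector. -/
noncomputable def ee {n : ℕ} (i : Fin n) : EuclideanSpace ℝ (Fin n) := EuclideanSpace.single i 1

lemma hk_cont (n : ℕ) : ContinuousOn (Function.uncurry (hk n)) (Set.Ioi 0 ×ˢ Set.univ) := by
  unfold Function.uncurry hk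
  have h1 : ContinuousOn (fun p : ℝ × EuclideanSpace ℝ (Fin n) => (2 * π * p.1) ^ (-(n : ℝ) / 2))
      (Set.Ioi 0 ×ˢ Set.univ) := by
    refine ContinuousOn.rpow_const (by fun_prop) fun p hp => Or.inl ?_
    have : 0 < p.1 := hp.1
    positivity
  refine h1.mul (Real.continuous_exp.comp_continuousOn ?_)
  refine ContinuousOn.div (by fun_prop) (by fun_prop) fun p hp => ?_
  have : 0 < p.1 := hp.1
  positivity

lemma hk_cont' (n : ℕ) (t : ℝ) : Continuous (hk n t) := by
  unfold hk; fun_prop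

lemma hasDerivAt_hk_space {n : ℕ} {t : ℝ} (ht : 0 < t) (i : Fin n)
    (y x : EuclideanSpace ℝ (Fin n)) (r : ℝ) :
    HasDerivAt (fun r => hk n t (y - (x + r • ee i)))
      ((y - (x + r • ee i)) i / t * hk n t (y - (x + r • ee i))) r := by
  have hl : HasDerivAt (fun r : ℝ => y - (x + r • ee i)) (-ee i) r := by
    simpa using (((hasDerivAt_id r).smul_const (ee i)).const_add x).const_sub y
  have hn := hl.norm_sq
  have hin : inner ℝ (y - (x + r • ee i)) (-ee i) = -(y - (x + r • ee i)) i := by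
    rw [inner_neg_right, ee, EuclideanSpace.inner_single_right]; simp
  rw [hin] at hn
  unfold hk
  refine (((hn.fun_neg.div_const (2 * t)).exp).const_mul _).congr_deriv ?_
  field_simp

lemma hasDerivAt_hk_space2 {n : ℕ} {t : ℝ} (ht : 0 < t) (i : Fin n)
    (y x : EuclideanSpace ℝ (Fin n)) (r : ℝ) :
    HasDerivAt (fun r => (y - (x + r • ee i)) i / t * hk n t (y - (x + r • ee i)))
      ((((y - (x + r • ee i)) i) ^ 2 / t ^ 2 - 1 / t) * hk n t (y - (x + r • ee i))) r := by
  have e : ∀ r : ℝ, (y - (x + r • ee i)) i = y i - (x i + r) := fun r => by simp [ee]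
  have hl : HasDerivAt (fun r : ℝ => (y - (x + r • ee i)) i / t) (-1 / t) r := by
    simp_rw [e]
    exact (((hasDerivAt_id r).const_add (x i)).const_sub (y i)).div_const t
  refine (hl.mul (hasDerivAt_hk_space ht i y x r)).congr_deriv ?_
  field_simp
  ring

lemma hasDerivAt_hk_time {n : ℕ} {t : ℝ} (ht : 0 < t) (v : EuclideanSpace ℝ (Fin n)) :
    HasDerivAt (fun t => hk n t v) ((‖v‖ ^ 2 / (2 * t ^ 2) - n / (2 * t)) * hk n t v) t := by
  have h1 : HasDerivAt (fun t : ℝ => 2 * π * t) (2 * π) t := by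
    simpa using (hasDerivAt_id t).const_mul (2 * π)
  have h2 := h1.rpow_const (p := -(n : ℝ) / 2) (Or.inl (by positivity))
  have h3 : HasDerivAt (fun t : ℝ => -‖v‖ ^ 2 / (2 * t)) (‖v‖ ^ 2 / (2 * t ^ 2)) t := by
    have := ((hasDerivAt_id t).const_mul 2).fun_inv (by simpa using ht.ne')
    refine ((this.const_mul (-‖v‖ ^ 2)).congr_deriv ?_)
    simp only [id]
    field_simp
  unfold hk
  refine (h2.mul h3.exp).congr_deriv ?_
  rw [Real.rpow_sub_one (by positivity)]
  field_simp
  ring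

/-- `w` solves the heat equation `∂ₜ w = ½ Δ w` at positive times, the second derivatives being
taken along the coordinate lines. -/
def HeatSol (n : ℕ) (w : ℝ → EuclideanSpace ℝ (Fin n) → ℝ) : Prop :=
  ∃ w1 w2 : Fin n → ℝ → EuclideanSpace ℝ (Fin n) → ℝ, ∀ t x, 0 < t →
    (∀ i r, HasDerivAt (fun r : ℝ => w t (x + r • ee i)) (w1 i t (x + r • ee i)) r) ∧
    (∀ i r, HasDerivAt (fun r : ℝ => w1 i t (x + r • ee i)) (w2 i t (x + r • ee i)) r) ∧
    HasDerivAt (fun t => w t x) (1 / 2 * ∑ i, w2 i t x) t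

lemma heatSol_heat {n : ℕ} {f : EuclideanSpace ℝ (Fin n) → ℝ} (hf : Continuous f)
    (hc : HasCompactSupport f) : HeatSol n (heat n f) := by
  refine ⟨fun i t x => ∫ y, f y * ((y - x) i / t * hk n t (y - x)),
    fun i t x => ∫ y, f y * ((((y - x) i) ^ 2 / t ^ 2 - 1 / t) * hk n t (y - x)),
    fun t x ht => ⟨fun i r => ?_, fun i r => ?_, ?_⟩⟩
  · simp_rw [heat_eq f ht]
    refine hasDerivAt_integral_compact hf hc isOpen_univ (Set.mem_univ r)
      (K' := fun r y => (y - (x + r • ee i)) i / t * hk n t (y - (x + r • ee i)))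
      (fun r _ y => hasDerivAt_hk_space ht i y x r) ?_ fun r _ => ?_
    · have := hk_cont' n t
      unfold Function.uncurry
      fun_prop
    · have := hk_cont' n t
      fun_prop
  · refine hasDerivAt_integral_compact hf hc isOpen_univ (Set.mem_univ r)
      (K' := fun r y => (((y - (x + r • ee i)) i) ^ 2 / t ^ 2 - 1 / t)
        * hk n t (y - (x + r • ee i)))
      (fun r _ y => hasDerivAt_hk_space2 ht i y x r) ?_ fun r _ => ?_
    · have := hk_cont' n t
      unfold Function.uncurry
      fun_prop
    · have := hk_cont' n t
      fun_prop
  · have h := hasDerivAt_integral_compact hf hc isOpen_Ioi (Set.mem_Ioi.2 ht)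
      (K := fun t y => hk n t (y - x))
      (K' := fun t y => (‖y - x‖ ^ 2 / (2 * t ^ 2) - n / (2 * t)) * hk n t (y - x))
      (fun t ht y => hasDerivAt_hk_time ht (y - x)) ?_ fun r _ => ?_
    · have e : (fun t => heat n f t x) =ᶠ[nhds t] fun t => ∫ y, f y * hk n t (y - x) := by
        filter_upwards [lt_mem_nhds ht] with s hs
        exact heat_eq f hs x
      refine (h.congr_of_eventuallyEq e).congr_deriv ?_
      rw [← integral_finsetSum, ← integral_const_mul]
      · congr 1
        ext y
        rw [EuclideanSpace.norm_sq_eq]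
        simp only [Real.norm_eq_abs, sq_abs]
        rw [← Finset.mul_sum, ← Finset.sum_mul, Finset.sum_sub_distrib, ← Finset.sum_div]
        simp only [Finset.sum_const, Finset.card_univ, Fintype.card_fin, nsmul_eq_mul]
        field_simp
      · intro i _
        refine Continuous.integrable_of_hasCompactSupport ?_ hc.mul_right
        have := hk_cont' n t
        fun_prop
    · unfold Function.uncurry
      have h1 : ContinuousOn (fun p : ℝ × EuclideanSpace ℝ (Fin n) => hk n p.1 (p.2 - x))
          (Set.Ioi 0 ×ˢ Set.univ) :=
        (hk_cont n).comp (f := fun p : ℝ × EuclideanSpace ℝ (Fin n) => (p.1, p.2 - x))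
          (by fun_prop) fun p hp => ⟨hp.1, trivial⟩
      refine ContinuousOn.mul (ContinuousOn.sub ?_ ?_) h1
      · refine ContinuousOn.div (by fun_prop) (by fun_prop) fun p hp => ?_
        have : 0 < p.1 := hp.1
        positivity
      · refine ContinuousOn.div (by fun_prop) (by fun_prop) fun p hp => ?_
        have : 0 < p.1 := hp.1
        positivity
    · have := hk_cont' n r
      fun_prop

lemma HeatSol.const_add {n : ℕ} {w : ℝ → EuclideanSpace ℝ (Fin n) → ℝ} (h : HeatSol n w) (c : ℝ) :
    HeatSol n fun t x => c + w t x := by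
  obtain ⟨w1, w2, h⟩ := h
  refine ⟨w1, w2, fun t x ht => ⟨fun i r => ?_, (h t x ht).2.1, ?_⟩⟩
  · exact ((h t x ht).1 i r).const_add c
  · exact (h t x ht).2.2.const_add c

/-- `u` solves `∂ₜ u = ½ (Δ u - u |∇ u|²)`, the equation satisfied by `Q ∘ w` when `w` solves the
heat equation. -/
def QSol (n : ℕ) (u : ℝ → EuclideanSpace ℝ (Fin n) → ℝ) : Prop :=
  ∃ u1 u2 : Fin n → ℝ → EuclideanSpace ℝ (Fin n) → ℝ, ∀ t x, 0 < t →
    (∀ i r, HasDerivAt (fun r : ℝ => u t (x + r • ee i)) (u1 i t (x + r • ee i)) r) ∧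
    (∀ i r, HasDerivAt (fun r : ℝ => u1 i t (x + r • ee i)) (u2 i t (x + r • ee i)) r) ∧
    HasDerivAt (fun t => u t x) (1 / 2 * ∑ i, (u2 i t x - u t x * u1 i t x ^ 2)) t

/-- The substitution `w = Phi u` turns the heat equation into the equation of `QSol`. -/
lemma HeatSol.q {n : ℕ} {w : ℝ → EuclideanSpace ℝ (Fin n) → ℝ} (h : HeatSol n w)
    (h0 : ∀ t x, 0 < w t x) (h1 : ∀ t x, w t x < 1) : QSol n fun t x => Q (w t x) := by
  obtain ⟨w1, w2, h⟩ := h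
  refine ⟨fun i t x => (gphi (Q (w t x)))⁻¹ * w1 i t x, fun i t x =>
    (gphi (Q (w t x)))⁻¹ * w2 i t x + Q (w t x) * ((gphi (Q (w t x)))⁻¹ * w1 i t x) ^ 2,
    fun t x ht => ⟨fun i r => ?_, fun i r => ?_, ?_⟩⟩
  · exact (Q_hasDerivAt (h0 _ _) (h1 _ _)).comp r ((h t x ht).1 i r)
  · have hu := (Q_hasDerivAt (h0 t (x + r • ee i)) (h1 _ _)).comp r ((h t x ht).1 i r)
    have hg := ((gphi_hasDerivAt _).comp r hu).inv (gphi_pos _).ne'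
    refine (hg.mul ((h t x ht).2.1 i r)).congr_deriv ?_
    have := (gphi_pos (Q (w t (x + r • ee i)))).ne'
    simp only [Function.comp, Pi.inv_apply]
    field_simp
    ring
  · refine ((Q_hasDerivAt (h0 _ _) (h1 _ _)).comp t (h t x ht).2.2).congr_deriv ?_
    simp only [add_sub_cancel_right]
    rw [← Finset.mul_sum]
    ring

/-! ### Borell's maximum principle -/

/-- Necessary second-order conditions at a global minimum. -/
lemma second_order {φ ψ : ℝ → ℝ} {c : ℝ} (h1 : ∀ r, HasDerivAt φ (ψ r) r)
    (h2 : HasDerivAt ψ c 0) (hm : ∀ r, φ 0 ≤ φ r) : ψ 0 = 0 ∧ 0 ≤ c := by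
  have hmin : IsLocalMin φ 0 := Filter.Eventually.of_forall hm
  have h0 : ψ 0 = 0 := hmin.hasDerivAt_eq_zero (h1 0)
  refine ⟨h0, ?_⟩
  by_contra! hc
  have hd : deriv φ = ψ := funext fun r => (h1 r).deriv
  have hmax := isLocalMax_of_deriv_deriv_neg (f := φ) (x₀ := 0) (by rw [hd, h2.deriv]; exact hc)
    (by rw [hd, h0]) (h1 0).continuousAt
  -- a point that is both a local minimum and a local maximum has a locally constant germ
  have hconst : φ =ᶠ[nhds 0] fun _ => φ 0 := by
    filter_upwards [hmin, hmax] with r ha hb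
    exact le_antisymm hb ha
  have h3 : ψ =ᶠ[nhds 0] fun _ => 0 := by
    rw [← hd]
    simpa using hconst.deriv
  have := h3.deriv_eq
  rw [h2.deriv] at this
  simp at this
  linarith

/-- Necessary first-order condition at the final time of a minimum over `[0, t₀]`. -/
lemma first_order_time {φ : ℝ → ℝ} {c t₀ : ℝ} (ht : 0 < t₀) (h : HasDerivAt φ c t₀)
    (hm : ∀ s, 0 ≤ s → s ≤ t₀ → φ t₀ ≤ φ s) : c ≤ 0 := by
  have h1 := h.hasDerivWithinAt (s := Set.Iio t₀)
  rw [hasDerivWithinAt_iff_tendsto_slope' (by simp)] at h1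
  refine le_of_tendsto h1 ?_
  filter_upwards [self_mem_nhdsWithin, nhdsWithin_le_nhds (lt_mem_nhds ht)] with s hs hs0
  have hs' : s < t₀ := hs
  rw [slope_def_field]
  exact div_nonpos_of_nonneg_of_nonpos (by linarith [hm s hs0.le hs'.le]) (by linarith)

/-- Parabolic maximum principle in Borell's form: the midpoint inequality
`½ (u_f(x) + u_g(y)) ≤ u_h((x + y) / 2)` propagates along `∂ₜ u = ½ (Δ u - u |∇ u|²)`.
At a negative minimum of the difference the three gradients agree, the second-order terms have a
sign along the diagonal directions `(e_i, e_i)`, and the reaction term pushes the minimum up. -/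
lemma borell_max_principle {n : ℕ} {uf ug uh : ℝ → EuclideanSpace ℝ (Fin n) → ℝ}
    (hf : QSol n uf) (hg : QSol n ug) (hh : QSol n uh)
    (cf : Continuous fun p : ℝ × EuclideanSpace ℝ (Fin n) => uf p.1 p.2)
    (cg : Continuous fun p : ℝ × EuclideanSpace ℝ (Fin n) => ug p.1 p.2)
    (ch : Continuous fun p : ℝ × EuclideanSpace ℝ (Fin n) => uh p.1 p.2)
    (h0 : ∀ x y, 1 / 2 * uf 0 x + 1 / 2 * ug 0 y ≤ uh 0 ((1 / 2 : ℝ) • (x + y)))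
    (hinf : ∀ ε > 0, ∃ R : ℝ, ∀ t ∈ Set.Icc (0 : ℝ) 1, ∀ x y, R < ‖x‖ ∨ R < ‖y‖ →
      1 / 2 * uf t x + 1 / 2 * ug t y ≤ uh t ((1 / 2 : ℝ) • (x + y)) + ε)
    {t : ℝ} (ht : t ∈ Set.Icc (0 : ℝ) 1) (x y : EuclideanSpace ℝ (Fin n)) :
    1 / 2 * uf t x + 1 / 2 * ug t y ≤ uh t ((1 / 2 : ℝ) • (x + y)) := by
  refine le_of_forall_pos_le_add fun ε' hε' => ?_
  set ε := ε' / 2 with hεd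
  have hε : 0 < ε := by positivity
  let D : ℝ × EuclideanSpace ℝ (Fin n) × EuclideanSpace ℝ (Fin n) → ℝ := fun p =>
    uh p.1 ((1 / 2 : ℝ) • (p.2.1 + p.2.2)) - 1 / 2 * uf p.1 p.2.1 - 1 / 2 * ug p.1 p.2.2
      + ε * (1 + p.1)
  have hDc : Continuous D := by
    have a1 := ch.comp (by fun_prop : Continuous fun p : ℝ × EuclideanSpace ℝ (Fin n) ×
      EuclideanSpace ℝ (Fin n) => (p.1, (1 / 2 : ℝ) • (p.2.1 + p.2.2)))
    have a2 := cf.comp (by fun_prop : Continuous fun p : ℝ × EuclideanSpace ℝ (Fin n) ×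
      EuclideanSpace ℝ (Fin n) => (p.1, p.2.1))
    have a3 := cg.comp (by fun_prop : Continuous fun p : ℝ × EuclideanSpace ℝ (Fin n) ×
      EuclideanSpace ℝ (Fin n) => (p.1, p.2.2))
    simp only [Function.comp_def] at a1 a2 a3
    fun_prop
  suffices hD : ∀ t ∈ Set.Icc (0 : ℝ) 1, ∀ x y, 0 ≤ D (t, x, y) by
    have h := hD t ht x y
    simp only [D] at h
    nlinarith [ht.2]
  by_contra! hneg
  obtain ⟨s, hs, a, b, hab⟩ := hneg
  obtain ⟨R, hR⟩ := hinf ε hε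
  set R' := max R (max ‖a‖ ‖b‖)
  have hcomp : IsCompact (Set.Icc (0 : ℝ) 1 ×ˢ
      (Metric.closedBall (0 : EuclideanSpace ℝ (Fin n)) R' ×ˢ
        Metric.closedBall (0 : EuclideanSpace ℝ (Fin n)) R')) :=
    isCompact_Icc.prod ((isCompact_closedBall _ _).prod (isCompact_closedBall _ _))
  have hmem : (s, a, b) ∈ (Set.Icc (0 : ℝ) 1 ×ˢ
      (Metric.closedBall (0 : EuclideanSpace ℝ (Fin n)) R' ×ˢ
        Metric.closedBall (0 : EuclideanSpace ℝ (Fin n)) R')) := by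
    refine ⟨hs, ?_, ?_⟩ <;> simp [R']
  obtain ⟨⟨t₀, x₀, y₀⟩, hp, hmin⟩ := hcomp.exists_isMinOn ⟨_, hmem⟩ hDc.continuousOn
  have ht₀ : t₀ ∈ Set.Icc (0 : ℝ) 1 := hp.1
  have hD0 : D (t₀, x₀, y₀) < 0 := lt_of_le_of_lt (hmin hmem) hab
  have hglob : ∀ t ∈ Set.Icc (0 : ℝ) 1, ∀ x y, D (t₀, x₀, y₀) ≤ D (t, x, y) := by
    intro t ht x y
    by_cases hxy : R' < ‖x‖ ∨ R' < ‖y‖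
    · have := hR t ht x y (hxy.imp (lt_of_le_of_lt (le_max_left _ _))
        (lt_of_le_of_lt (le_max_left _ _)))
      refine hD0.le.trans ?_
      simp only [D]
      nlinarith [ht.1]
    · push Not at hxy
      exact hmin (show (t, x, y) ∈ _ from ⟨ht, by simpa using hxy.1, by simpa using hxy.2⟩)
  have htpos : 0 < t₀ := by
    rcases ht₀.1.eq_or_lt with h | h
    · exfalso
      have := h0 x₀ y₀
      simp only [D, ← h] at hD0
      linarith
    · exact h
  obtain ⟨f1, f2, hf⟩ := hf
  obtain ⟨g1, g2, hg⟩ := hg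
  obtain ⟨h1, h2, hh⟩ := hh
  set z₀ := (1 / 2 : ℝ) • (x₀ + y₀) with hz₀
  obtain ⟨hf1, hf2, hft⟩ := hf t₀ x₀ htpos
  obtain ⟨hg1, hg2, hgt⟩ := hg t₀ y₀ htpos
  obtain ⟨hh1, hh2, hht⟩ := hh t₀ z₀ htpos
  have hhalf : ∀ (i : Fin n) (r : ℝ), HasDerivAt (fun r : ℝ => uh t₀ (z₀ + (r / 2) • ee i))
      (h1 i t₀ (z₀ + (r / 2) • ee i) * (1 / 2)) r := fun i r =>
    HasDerivAt.comp (h₂ := fun r : ℝ => uh t₀ (z₀ + r • ee i)) (h := fun r : ℝ => r / 2) r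
      (hh1 i (r / 2)) ((hasDerivAt_id r).div_const 2)
  have gradf : ∀ i, f1 i t₀ x₀ = h1 i t₀ z₀ := by
    intro i
    have hd : HasDerivAt (fun r : ℝ => D (t₀, x₀ + r • ee i, y₀))
        (h1 i t₀ z₀ * (1 / 2) - 1 / 2 * f1 i t₀ x₀) 0 := by
      have e : (fun r : ℝ => D (t₀, x₀ + r • ee i, y₀)) = fun r : ℝ =>
          uh t₀ (z₀ + (r / 2) • ee i) - 1 / 2 * uf t₀ (x₀ + r • ee i) - 1 / 2 * ug t₀ y₀
            + ε * (1 + t₀) := by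
        ext r
        simp only [D]
        congr 4
        rw [hz₀]; module
      rw [e]
      have := (((hhalf i 0).sub ((hf1 i 0).const_mul (1 / 2))).sub_const
        (1 / 2 * ug t₀ y₀)).add_const (ε * (1 + t₀))
      simpa using this
    have hm : IsLocalMin (fun r : ℝ => D (t₀, x₀ + r • ee i, y₀)) 0 :=
      Filter.Eventually.of_forall fun r => by simpa using hglob t₀ ht₀ (x₀ + r • ee i) y₀
    have := hm.hasDerivAt_eq_zero hd
    linarith
  have gradg : ∀ i, g1 i t₀ y₀ = h1 i t₀ z₀ := by
    intro i
    have hd : HasDerivAt (fun r : ℝ => D (t₀, x₀, y₀ + r • ee i))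
        (h1 i t₀ z₀ * (1 / 2) - 1 / 2 * g1 i t₀ y₀) 0 := by
      have e : (fun r : ℝ => D (t₀, x₀, y₀ + r • ee i)) = fun r : ℝ =>
          uh t₀ (z₀ + (r / 2) • ee i) - 1 / 2 * uf t₀ x₀ - 1 / 2 * ug t₀ (y₀ + r • ee i)
            + ε * (1 + t₀) := by
        ext r
        simp only [D]
        congr 4
        rw [hz₀]; module
      rw [e]
      have := (((hhalf i 0).sub_const (1 / 2 * uf t₀ x₀)).sub
        ((hg1 i 0).const_mul (1 / 2))).add_const (ε * (1 + t₀))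
      simpa using this
    have hm : IsLocalMin (fun r : ℝ => D (t₀, x₀, y₀ + r • ee i)) 0 :=
      Filter.Eventually.of_forall fun r => by simpa using hglob t₀ ht₀ x₀ (y₀ + r • ee i)
    have := hm.hasDerivAt_eq_zero hd
    linarith
  have hess : ∀ i, 0 ≤ h2 i t₀ z₀ - 1 / 2 * f2 i t₀ x₀ - 1 / 2 * g2 i t₀ y₀ := by
    intro i
    have e : (fun r : ℝ => D (t₀, x₀ + r • ee i, y₀ + r • ee i)) = fun r : ℝ =>
        uh t₀ (z₀ + r • ee i) - 1 / 2 * uf t₀ (x₀ + r • ee i) - 1 / 2 * ug t₀ (y₀ + r • ee i)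
          + ε * (1 + t₀) := by
      ext r
      simp only [D]
      congr 4
      rw [hz₀]; module
    have hd1 : ∀ r, HasDerivAt (fun r : ℝ => D (t₀, x₀ + r • ee i, y₀ + r • ee i))
        (h1 i t₀ (z₀ + r • ee i) - 1 / 2 * f1 i t₀ (x₀ + r • ee i)
          - 1 / 2 * g1 i t₀ (y₀ + r • ee i)) r := by
      intro r
      rw [e]
      exact (((hh1 i r).sub ((hf1 i r).const_mul (1 / 2))).sub
        ((hg1 i r).const_mul (1 / 2))).add_const (ε * (1 + t₀))
    have hd2 := ((hh2 i 0).sub ((hf2 i 0).const_mul (1 / 2))).sub ((hg2 i 0).const_mul (1 / 2))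
    have := (second_order hd1 hd2 fun r => by
      simpa using hglob t₀ ht₀ (x₀ + r • ee i) (y₀ + r • ee i)).2
    simpa using this
  have hdt : HasDerivAt (fun t : ℝ => D (t, x₀, y₀))
      (1 / 2 * ∑ i, (h2 i t₀ z₀ - uh t₀ z₀ * h1 i t₀ z₀ ^ 2)
        - 1 / 2 * (1 / 2 * ∑ i, (f2 i t₀ x₀ - uf t₀ x₀ * f1 i t₀ x₀ ^ 2))
        - 1 / 2 * (1 / 2 * ∑ i, (g2 i t₀ y₀ - ug t₀ y₀ * g1 i t₀ y₀ ^ 2)) + ε) t₀ := by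
    have he : HasDerivAt (fun t : ℝ => ε * (1 + t)) ε t₀ := by
      simpa using ((hasDerivAt_id t₀).const_add 1).const_mul ε
    exact ((hht.sub (hft.const_mul (1 / 2))).sub (hgt.const_mul (1 / 2))).add he
  have hle := first_order_time htpos hdt fun s hs0 hs1 => hglob s ⟨hs0, hs1.trans ht₀.2⟩ x₀ y₀
  have hsum : 1 / 2 * ∑ i, (h2 i t₀ z₀ - uh t₀ z₀ * h1 i t₀ z₀ ^ 2)
        - 1 / 2 * (1 / 2 * ∑ i, (f2 i t₀ x₀ - uf t₀ x₀ * f1 i t₀ x₀ ^ 2))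
        - 1 / 2 * (1 / 2 * ∑ i, (g2 i t₀ y₀ - ug t₀ y₀ * g1 i t₀ y₀ ^ 2))
      = 1 / 2 * ∑ i, ((h2 i t₀ z₀ - 1 / 2 * f2 i t₀ x₀ - 1 / 2 * g2 i t₀ y₀)
        + (-(uh t₀ z₀ - 1 / 2 * uf t₀ x₀ - 1 / 2 * ug t₀ y₀)) * h1 i t₀ z₀ ^ 2) := by
    simp_rw [gradf, gradg]
    simp only [Finset.mul_sum, ← Finset.sum_sub_distrib]
    exact Finset.sum_congr rfl fun i _ => by ring
  have hC : 0 ≤ -(uh t₀ z₀ - 1 / 2 * uf t₀ x₀ - 1 / 2 * ug t₀ y₀) := by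
    simp only [D, ← hz₀] at hD0
    nlinarith
  have hnn : 0 ≤ ∑ i, ((h2 i t₀ z₀ - 1 / 2 * f2 i t₀ x₀ - 1 / 2 * g2 i t₀ y₀)
        + (-(uh t₀ z₀ - 1 / 2 * uf t₀ x₀ - 1 / 2 * ug t₀ y₀)) * h1 i t₀ z₀ ^ 2) :=
    Finset.sum_nonneg fun i _ => add_nonneg (hess i) (mul_nonneg hC (sq_nonneg _))
  rw [hsum] at hle
  linarith

/-! ### Ehrhard's inequality at the midpoint -/

/-- A continuous approximation of `Phi M • 1_A` with floor `Phi (-L)`. -/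
noncomputable def bump {n : ℕ} (L M K : ℝ) (A : Set (EuclideanSpace ℝ (Fin n)))
    (x : EuclideanSpace ℝ (Fin n)) : ℝ :=
  Phi (max (-L) (M - K * Metric.infDist x A))

section bump

variable {n : ℕ} {L M K : ℝ} {A : Set (EuclideanSpace ℝ (Fin n))}

lemma bump_cont : Continuous (bump L M K A) := by
  have := Metric.continuous_infDist_pt A
  exact Phi_cont.comp (by fun_prop)

lemma bump_ge (x) : Phi (-L) ≤ bump L M K A x := Phi_strictMono.monotone (le_max_left _ _)

lemma bump_le (hLM : -L ≤ M) (hK : 0 ≤ K) (x) : bump L M K A x ≤ Phi M := by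
  refine Phi_strictMono.monotone (max_le hLM ?_)
  have := mul_nonneg hK (Metric.infDist_nonneg (x := x) (s := A))
  linarith

lemma bump_abs (x) : |bump L M K A x| ≤ 1 := by
  unfold bump
  rw [abs_of_pos (Phi_pos _)]
  exact (Phi_lt_one _).le

lemma bump_on (hLM : -L ≤ M) {x} (hx : x ∈ A) : bump L M K A x = Phi M := by
  unfold bump
  rw [Metric.infDist_zero_of_mem hx, mul_zero, sub_zero, max_eq_right hLM]

lemma bump_far (hK : 0 < K) (hA : IsCompact A) (hne : A.Nonempty) :
    ∃ R : ℝ, ∀ x, R < ‖x‖ → bump L M K A x = Phi (-L) := by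
  obtain ⟨R, hR⟩ := hA.isBounded.exists_norm_le
  refine ⟨R + (M + L) / K, fun x hx => ?_⟩
  obtain ⟨a, ha, hd⟩ := hA.exists_infDist_eq_dist hne x
  have h1 : ‖x‖ ≤ ‖a‖ + dist x a := by
    rw [dist_eq_norm]; have := norm_add_le a (x - a); simpa using this
  have h2 : (M + L) / K < dist x a := by linarith [hR a ha]
  rw [div_lt_iff₀ hK] at h2
  unfold bump
  rw [hd, max_eq_left]
  linarith

lemma bump_heatSol (hK : 0 < K) (hA : IsCompact A) (hne : A.Nonempty) :
    HeatSol n (heat n (bump L M K A)) := by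
  obtain ⟨R, hR⟩ := bump_far (L := L) (M := M) hK hA hne
  have hc : HasCompactSupport fun x => bump L M K A x - Phi (-L) := by
    refine HasCompactSupport.intro (isCompact_closedBall 0 R) fun x hx => ?_
    rw [hR x (by simpa using hx), sub_self]
  have h := (heatSol_heat (by exact bump_cont.sub continuous_const) hc).const_add (Phi (-L))
  convert h using 1
  ext t x
  unfold heat
  rw [integral_sub (heat_integrable bump_cont bump_abs t x) (integrable_const _)]
  simp

lemma heat_bump_ge (t x) : Phi (-L) ≤ heat n (bump L M K A) t x := by
  have := integral_mono (integrable_const (Phi (-L)))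
    (heat_integrable (bump_cont (L := L) (M := M) (K := K) (A := A)) bump_abs t x)
    fun z => bump_ge _
  simpa [heat] using this

lemma heat_bump_le (hLM : -L ≤ M) (hK : 0 ≤ K) (t x) : heat n (bump L M K A) t x ≤ Phi M := by
  have := integral_mono (heat_integrable (bump_cont (L := L) (M := M) (K := K) (A := A))
    bump_abs t x) (integrable_const (Phi M)) fun z => bump_le hLM hK _
  simpa [heat] using this

lemma heat_bump_pos (t x) : 0 < heat n (bump L M K A) t x := (Phi_pos _).trans_le (heat_bump_ge t x)

lemma heat_bump_lt_one (hLM : -L ≤ M) (hK : 0 ≤ K) (t x) : heat n (bump L M K A) t x < 1 :=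
  (heat_bump_le hLM hK t x).trans_lt (Phi_lt_one _)

lemma heat_zero (f : EuclideanSpace ℝ (Fin n) → ℝ) (x) : heat n f 0 x = f x := by
  simp [heat]

lemma stdGaussian_tail {δ : ℝ} (hδ : 0 < δ) :
    ∃ R : ℝ, (stdGaussian n).real {z | R < ‖z‖} < δ := by
  obtain ⟨S, -, hS, hlt⟩ := MeasurableSet.univ.exists_isCompact_sdiff_lt
    (μ := stdGaussian n) (measure_ne_top _ _) (ε := ENNReal.ofReal δ) (by simpa using hδ)
  obtain ⟨R, hR⟩ := hS.isBounded.exists_norm_le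
  refine ⟨R, ?_⟩
  rw [measureReal_def, ← ENNReal.lt_ofReal_iff_toReal_lt (measure_ne_top _ _)]
  have hsub : {z : EuclideanSpace ℝ (Fin n) | R < ‖z‖} ⊆ Set.univ \ S :=
    fun z hz => ⟨trivial, fun hzS => absurd (hR z hzS) (not_le.2 hz)⟩
  exact (measure_mono hsub).trans_lt hlt

/-- The heat evolution of a bump tends to its floor at infinity, uniformly for `t ∈ [0, 1]`. -/
lemma heat_bump_far (hLM : -L ≤ M) (hK : 0 < K) (hA : IsCompact A) (hne : A.Nonempty)
    {δ : ℝ} (hδ : 0 < δ) : ∃ R : ℝ, ∀ t ∈ Set.Icc (0 : ℝ) 1, ∀ x : EuclideanSpace ℝ (Fin n),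
      R < ‖x‖ → heat n (bump L M K A) t x ≤ Phi (-L) + δ := by
  obtain ⟨R, hR⟩ := bump_far (L := L) (M := M) hK hA hne
  obtain ⟨R1, hR1⟩ := stdGaussian_tail (n := n) hδ
  refine ⟨R + R1, fun t ht x hx => ?_⟩
  have hmeas : MeasurableSet {z : EuclideanSpace ℝ (Fin n) | R1 < ‖z‖} :=
    measurableSet_lt measurable_const measurable_norm
  have hi : Integrable (fun z => Phi (-L) + Set.indicator {z | R1 < ‖z‖} (fun _ => (1 : ℝ)) z)
      (stdGaussian n) := (integrable_const _).add ((integrable_const _).indicator hmeas)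
  have hm := integral_mono (heat_integrable (bump_cont (L := L) (M := M) (K := K) (A := A))
    bump_abs t x) hi fun z => ?_
  · rw [integral_add (integrable_const _) ((integrable_const _).indicator hmeas),
      integral_indicator_const _ hmeas] at hm
    simp only [integral_const, measureReal_def, measure_univ, ENNReal.toReal_one, smul_eq_mul,
      one_mul, mul_one] at hm
    rw [measureReal_def] at hR1
    exact hm.trans (by linarith)
  · dsimp only
    by_cases hz : R1 < ‖z‖
    · rw [Set.indicator_of_mem (show z ∈ {z | R1 < ‖z‖} from hz)]
      linarith [bump_le (A := A) hLM hK.le (x + √t • z), Phi_lt_one M, Phi_pos (-L)]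
    · rw [Set.indicator_of_notMem (show z ∉ {z | R1 < ‖z‖} from hz), add_zero, hR]
      have h1 : ‖√t • z‖ ≤ ‖z‖ := by
        rw [norm_smul, Real.norm_of_nonneg (Real.sqrt_nonneg _)]
        exact mul_le_of_le_one_left (norm_nonneg _) (Real.sqrt_le_one.2 ht.2)
      have h2 : ‖x‖ ≤ ‖x + √t • z‖ + ‖√t • z‖ := by
        have := norm_sub_le (x + √t • z) (√t • z)
        simpa using this
      linarith [not_lt.1 hz]

lemma Q_heat_cont (hLM : -L ≤ M) (hK : 0 ≤ K) :
    Continuous fun p : ℝ × EuclideanSpace ℝ (Fin n) => Q (heat n (bump L M K A) p.1 p.2) :=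
  continuous_iff_continuousAt.2 fun _ =>
    ContinuousAt.comp (f := fun p : ℝ × EuclideanSpace ℝ (Fin n) => heat n (bump L M K A) p.1 p.2)
      (Q_hasDerivAt (heat_bump_pos _ _) (heat_bump_lt_one hLM hK _ _)).continuousAt
      (heat_cont bump_cont bump_abs).continuousAt

lemma Q_heat_far (hLM : -L ≤ M) (hK : 0 < K) (hA : IsCompact A) (hne : A.Nonempty)
    {ε : ℝ} (hε : 0 < ε) : ∃ R : ℝ, ∀ t ∈ Set.Icc (0 : ℝ) 1, ∀ x : EuclideanSpace ℝ (Fin n),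
      R < ‖x‖ → Q (heat n (bump L M K A) t x) ≤ -L + ε := by
  obtain ⟨R, hR⟩ := heat_bump_far (n := n) hLM hK hA hne
    (sub_pos.2 (Phi_strictMono (by linarith : -L < -L + ε)))
  refine ⟨R, fun t ht x hx => ?_⟩
  have h := hR t ht x hx
  rw [add_sub_cancel] at h
  simpa [Q_Phi] using Q_le (heat_bump_pos t x) h (Phi_lt_one _)

lemma Q_heat_le (hLM : -L ≤ M) (hK : 0 ≤ K) (t x) : Q (heat n (bump L M K A) t x) ≤ M := by
  simpa [Q_Phi] using Q_le (heat_bump_pos t x) (heat_bump_le hLM hK t x) (Phi_lt_one _)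

lemma Q_heat_ge (hLM : -L ≤ M) (hK : 0 ≤ K) (t x) : -L ≤ Q (heat n (bump L M K A) t x) := by
  simpa [Q_Phi] using Q_le (Phi_pos _) (heat_bump_ge t x) (heat_bump_lt_one hLM hK t x)

end bump

/-- The midpoint inequality at time `0`. The floor `-(M + 2 * k)` for `A` and `B` is so low that its
average with the maximal value `M` is the floor `-k` for `C`. -/
lemma bump_midpoint {n : ℕ} {A B C : Set (EuclideanSpace ℝ (Fin n))} (hA : IsCompact A)
    (hB : IsCompact B) (hAn : A.Nonempty) (hBn : B.Nonempty)
    (hABC : ∀ x ∈ A, ∀ y ∈ B, (1 / 2 : ℝ) • (x + y) ∈ C) {M k K : ℝ} (hM : 0 ≤ M) (hk : 0 ≤ k)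
    (hK : 0 ≤ K) (x y : EuclideanSpace ℝ (Fin n)) :
    1 / 2 * max (-(M + 2 * k)) (M - K * Metric.infDist x A)
      + 1 / 2 * max (-(M + 2 * k)) (M - K * Metric.infDist y B)
      ≤ max (-k) (M - K * Metric.infDist ((1 / 2 : ℝ) • (x + y)) C) := by
  obtain ⟨a, ha, hda⟩ := hA.exists_infDist_eq_dist hAn x
  obtain ⟨b, hb, hdb⟩ := hB.exists_infDist_eq_dist hBn y
  have hd : Metric.infDist ((1 / 2 : ℝ) • (x + y)) C ≤ 1 / 2 * (dist x a + dist y b) := by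
    refine (Metric.infDist_le_dist_of_mem (hABC a ha b hb)).trans ?_
    rw [dist_eq_norm, dist_eq_norm, dist_eq_norm,
      show (1 / 2 : ℝ) • (x + y) - (1 / 2 : ℝ) • (a + b) = (1 / 2 : ℝ) • ((x - a) + (y - b)) by
        module, norm_smul]
    norm_num
    exact norm_add_le _ _
  have ha0 : 0 ≤ K * dist x a := by positivity
  have hb0 : 0 ≤ K * dist y b := by positivity
  have hKd := mul_le_mul_of_nonneg_left hd hK
  rw [hda, hdb]
  rcases max_cases (-(M + 2 * k)) (M - K * dist x a) with h | h <;>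
  rcases max_cases (-(M + 2 * k)) (M - K * dist y b) with h' | h' <;> rw [h.1, h'.1]
  · exact le_max_of_le_left (by linarith)
  · exact le_max_of_le_left (by linarith)
  · exact le_max_of_le_left (by linarith)
  · exact le_max_of_le_right (by linarith)

/-- Ehrhard's inequality at the midpoint for the continuous approximations of three sets. -/
lemma ehrhard_bump {n : ℕ} {A B C : Set (EuclideanSpace ℝ (Fin n))} (hA : IsCompact A)
    (hB : IsCompact B) (hC : IsCompact C) (hAn : A.Nonempty) (hBn : B.Nonempty)
    (hABC : ∀ x ∈ A, ∀ y ∈ B, (1 / 2 : ℝ) • (x + y) ∈ C) {M k K : ℝ} (hM : 0 ≤ M) (hk : 0 ≤ k)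
    (hK : 0 < K) :
    1 / 2 * Q (∫ x, bump (M + 2 * k) M K A x ∂(stdGaussian n))
      + 1 / 2 * Q (∫ x, bump (M + 2 * k) M K B x ∂(stdGaussian n))
      ≤ Q (∫ x, bump k M K C x ∂(stdGaussian n)) := by
  have hCn : C.Nonempty := ⟨_, hABC _ hAn.some_mem _ hBn.some_mem⟩
  have l1 : -(M + 2 * k) ≤ M := by linarith
  have l2 : -k ≤ M := by linarith
  have h := borell_max_principle
    ((bump_heatSol (L := M + 2 * k) (M := M) hK hA hAn).q heat_bump_pos
      (heat_bump_lt_one l1 hK.le))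
    ((bump_heatSol (L := M + 2 * k) (M := M) hK hB hBn).q heat_bump_pos
      (heat_bump_lt_one l1 hK.le))
    ((bump_heatSol (L := k) (M := M) hK hC hCn).q heat_bump_pos
      (heat_bump_lt_one l2 hK.le))
    (Q_heat_cont l1 hK.le) (Q_heat_cont l1 hK.le) (Q_heat_cont l2 hK.le) ?_ ?_
    (t := 1) (by simp) 0 0
  · simpa [heat] using h
  · intro x y
    simp only [heat_zero, bump, Q_Phi]
    exact bump_midpoint hA hB hAn hBn hABC hM hk hK.le x y
  · intro ε hε
    obtain ⟨R1, hR1⟩ := Q_heat_far (L := M + 2 * k) (M := M) (n := n) l1 hK hA hAn hε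
    obtain ⟨R2, hR2⟩ := Q_heat_far (L := M + 2 * k) (M := M) (n := n) l1 hK hB hBn hε
    refine ⟨max R1 R2, fun t ht x y hxy => ?_⟩
    have hz := Q_heat_ge (A := C) l2 hK.le t ((1 / 2 : ℝ) • (x + y))
    have hx := Q_heat_le (A := A) l1 hK.le t x
    have hy := Q_heat_le (A := B) l1 hK.le t y
    rcases hxy with hxy | hxy
    · have := hR1 t ht x (lt_of_le_of_lt (le_max_left _ _) hxy)
      linarith
    · have := hR2 t ht y (lt_of_le_of_lt (le_max_right _ _) hxy)
      linarith

/-- As the floor goes down and the slope, quadratically faster, goes up, the bumps converge to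
`Phi M • 1_C`. -/
lemma tendsto_integral_bump {n : ℕ} {C : Set (EuclideanSpace ℝ (Fin n))} (hC : IsCompact C)
    (hCn : C.Nonempty) {M : ℝ} (hM : 0 ≤ M) :
    Filter.Tendsto (fun k : ℕ => ∫ x, bump (k : ℝ) M ((k + 1 : ℝ) ^ 2) C x ∂(stdGaussian n))
      Filter.atTop (nhds (Phi M * (stdGaussian n).real C)) := by
  have e : Phi M * (stdGaussian n).real C
      = ∫ x, C.indicator (fun _ => Phi M) x ∂(stdGaussian n) := by
    rw [integral_indicator_const _ hC.measurableSet, smul_eq_mul, mul_comm]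
  rw [e]
  refine tendsto_integral_of_dominated_convergence (fun _ => 1)
    (fun k => bump_cont.aestronglyMeasurable) (integrable_const _)
    (fun k => Filter.Eventually.of_forall bump_abs) (Filter.Eventually.of_forall fun x => ?_)
  by_cases hx : x ∈ C
  · rw [Set.indicator_of_mem hx]
    refine tendsto_const_nhds.congr fun k => (bump_on ?_ hx).symm
    have : (0 : ℝ) ≤ k := by positivity
    linarith
  · rw [Set.indicator_of_notMem hx]
    have hd : 0 < Metric.infDist x C := (hC.isClosed.notMem_iff_infDist_pos hCn).1 hx
    refine Phi_atBot.comp ?_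
    have hcast : Filter.Tendsto (fun k : ℕ => (k : ℝ)) Filter.atTop Filter.atTop :=
      tendsto_natCast_atTop_atTop
    have hlow : Filter.Tendsto (fun k : ℕ => -(k : ℝ)) Filter.atTop Filter.atBot :=
      Filter.tendsto_neg_atTop_atBot.comp hcast
    refine hlow.congr' ?_
    obtain ⟨m, hm⟩ := exists_nat_ge ((M + 1) / Metric.infDist x C)
    rw [div_le_iff₀ hd] at hm
    obtain ⟨m', hm'⟩ := exists_nat_ge (1 / Metric.infDist x C)
    rw [div_le_iff₀ hd] at hm'
    filter_upwards [Filter.eventually_ge_atTop (m + m')] with k hk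
    rw [max_eq_left]
    have hk' : (m : ℝ) + m' ≤ k := by exact_mod_cast hk
    set d := Metric.infDist x C
    have h0 : (0 : ℝ) ≤ m := by positivity
    have h0' : (0 : ℝ) ≤ m' := by positivity
    have hkd : M + 1 ≤ (k + 1) * d := by nlinarith
    have hkd' : 1 ≤ (k + 1) * d := by linarith
    have : (M + 1 - 1) + k ≤ (k + 1 : ℝ) ^ 2 * d := by
      have h1 : (m + m' + 1 : ℝ) * d ≥ M + 1 := by nlinarith
      have hkk : (0 : ℝ) ≤ k := by positivity
      nlinarith [mul_nonneg hkk (sub_nonneg.2 hkd)]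
    linarith

lemma integral_bump_ge {n : ℕ} {L M K : ℝ} {A : Set (EuclideanSpace ℝ (Fin n))}
    (hA : IsCompact A) (hLM : -L ≤ M) :
    Phi M * (stdGaussian n).real A ≤ ∫ x, bump L M K A x ∂(stdGaussian n) := by
  have e : Phi M * (stdGaussian n).real A
      = ∫ x, A.indicator (fun _ => Phi M) x ∂(stdGaussian n) := by
    rw [integral_indicator_const _ hA.measurableSet, smul_eq_mul, mul_comm]
  rw [e]
  refine integral_mono ((integrable_const _).indicator hA.measurableSet)
    (Integrable.of_bound bump_cont.aestronglyMeasurable 1 (Filter.Eventually.of_forall bump_abs))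
    fun x => ?_
  by_cases hx : x ∈ A
  · simp only [Set.indicator_of_mem hx, bump_on hLM hx, le_refl]
  · simp only [Set.indicator_of_notMem hx]
    exact (Phi_pos _).le

/-- The case of Ehrhard's inequality at the midpoint that is used below: if `γ(A) + γ(B) > 1` then
`(A + B) / 2` has measure greater than `1 / 2`. -/
theorem ehrhard_half {n : ℕ} {A B C : Set (EuclideanSpace ℝ (Fin n))} (hA : IsCompact A)
    (hB : IsCompact B) (hC : IsCompact C)
    (hABC : ∀ x ∈ A, ∀ y ∈ B, (1 / 2 : ℝ) • (x + y) ∈ C)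
    (h : 1 < (stdGaussian n).real A + (stdGaussian n).real B) :
    1 / 2 < (stdGaussian n).real C := by
  set a := (stdGaussian n).real A with ha
  set b := (stdGaussian n).real B with hb
  have ha1 : a ≤ 1 := measureReal_le_one
  have hb1 : b ≤ 1 := measureReal_le_one
  have ha0 : 0 < a := by linarith
  have hb0 : 0 < b := by linarith
  have hAn : A.Nonempty := by
    by_contra hne
    rw [Set.not_nonempty_iff_eq_empty] at hne
    simp [ha, hne] at ha0
  have hBn : B.Nonempty := by
    by_contra hne
    rw [Set.not_nonempty_iff_eq_empty] at hne
    simp [hb, hne] at hb0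
  have hCn : C.Nonempty := ⟨_, hABC _ hAn.some_mem _ hBn.some_mem⟩
  -- the height `M` is chosen so that `Phi M * (a + b) > 1` still holds
  obtain ⟨M, hM, hM0⟩ := ((Phi_atTop.eventually (lt_mem_nhds
    (show 1 / (a + b) < 1 by rw [div_lt_one (by linarith)]; exact h))).and
    (Filter.eventually_ge_atTop 0)).exists
  rw [div_lt_iff₀ (by linarith)] at hM
  have hα0 : 0 < Phi M * a := mul_pos (Phi_pos _) ha0
  have hβ0 : 0 < Phi M * b := mul_pos (Phi_pos _) hb0
  have hα1 : Phi M * a < 1 := by nlinarith [Phi_lt_one M, Phi_pos M]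
  have hβ1 : Phi M * b < 1 := by nlinarith [Phi_lt_one M, Phi_pos M]
  set c := 1 / 2 * Q (Phi M * a) + 1 / 2 * Q (Phi M * b) with hcd
  have hc : 0 < c := by
    have : -Q (Phi M * a) < Q (Phi M * b) := by
      rw [Q_lt_iff hβ0 hβ1, Phi_neg, Phi_Q hα0 hα1]
      linarith
    linarith
  have hk : ∀ k : ℕ, Phi c ≤ ∫ x, bump (k : ℝ) M ((k + 1 : ℝ) ^ 2) C x ∂(stdGaussian n) := by
    intro k
    have hk0 : (0 : ℝ) ≤ k := by positivity
    have hK : (0 : ℝ) < (k + 1 : ℝ) ^ 2 := by positivity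
    have lA : -(M + 2 * k) ≤ M := by linarith
    have lC : -(k : ℝ) ≤ M := by linarith
    have up : ∀ {L : ℝ} (S : Set (EuclideanSpace ℝ (Fin n))), -L ≤ M →
        ∫ x, bump L M ((k + 1 : ℝ) ^ 2) S x ∂(stdGaussian n) < 1 := fun S hL => by
      simpa [heat] using heat_bump_lt_one (n := n) (A := S) hL hK.le 1 0
    have lo : ∀ {L : ℝ} (S : Set (EuclideanSpace ℝ (Fin n))),
        0 < ∫ x, bump L M ((k + 1 : ℝ) ^ 2) S x ∂(stdGaussian n) := fun {L} S => by
      simpa [heat] using heat_bump_pos (n := n) (L := L) (M := M) (A := S)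
        (K := (k + 1 : ℝ) ^ 2) 1 0
    have hQ := ehrhard_bump hA hB hC hAn hBn hABC hM0 hk0 hK
    have h1 := Q_le hα0 (integral_bump_ge (K := (k + 1 : ℝ) ^ 2) hA lA) (up A lA)
    have h2 := Q_le hβ0 (integral_bump_ge (K := (k + 1 : ℝ) ^ 2) hB lA) (up B lA)
    rw [← Phi_Q (lo C) (up C lC), Phi_strictMono.le_iff_le]
    linarith
  have hlim := ge_of_tendsto' (tendsto_integral_bump hC hCn hM0) hk
  have h1 : 1 / 2 < Phi c := by rw [← Phi_zero]; exact Phi_strictMono hc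
  have h2 : Phi M * (stdGaussian n).real C ≤ (stdGaussian n).real C :=
    mul_le_of_le_one_left measureReal_nonneg (Phi_lt_one M).le
  linarith

/-! ### Sections of a convex set along a line -/

/-- An interval of length `2 * h` has the largest Gaussian measure when centred at the origin. -/
lemma Phi_interval_le {h : ℝ} (hh : 0 ≤ h) (c : ℝ) :
    Phi (c + h) - Phi (c - h) ≤ Phi h - Phi (-h) := by
  have key : ∀ c : ℝ, 0 ≤ c → Phi (c + h) - Phi (c - h) ≤ Phi h - Phi (-h) := by
    intro c hc
    have hd : ∀ x : ℝ, HasDerivAt (fun c => Phi (c + h) - Phi (c - h))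
        (gphi (x + h) - gphi (x - h)) x := fun x =>
      ((Phi_hasDerivAt _).comp_add_const x h).sub ((Phi_hasDerivAt _).comp_sub_const x h)
    have hanti : AntitoneOn (fun c => Phi (c + h) - Phi (c - h)) (Set.Ici 0) := by
      refine antitoneOn_of_deriv_nonpos (convex_Ici 0)
        (fun x _ => (hd x).continuousAt.continuousWithinAt)
        (fun x _ => (hd x).differentiableAt.differentiableWithinAt) fun x hx => ?_
      rw [interior_Ici] at hx
      rw [(hd x).deriv, sub_nonpos]
      refine gphi_le ?_
      have hx' : 0 < x := hx
      rw [abs_of_nonneg (by linarith : 0 ≤ x + h), abs_le]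
      constructor <;> linarith
    have := hanti (Set.mem_Ici.2 le_rfl) (Set.mem_Ici.2 hc) hc
    simpa using this
  rcases le_total 0 c with hc | hc
  · exact key c hc
  · have := key (-c) (by linarith)
    rw [show -c + h = -(c - h) by ring, show -c - h = -(c + h) by ring, Phi_neg (c - h),
      Phi_neg (c + h)] at this
    linarith

lemma gaussian1_real_Icc {a b : ℝ} (hab : a ≤ b) :
    gaussian1.real (Set.Icc a b) = Phi b - Phi a := by
  rw [gaussian1_real, integral_Icc_eq_integral_Ioc, ← intervalIntegral.integral_of_le hab,
    ← intervalIntegral.integral_Iic_sub_Iic gphi_integrable.integrableOn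
      gphi_integrable.integrableOn]
  rfl

lemma gaussian1_Icc_le {p q : ℝ} (hpq : p ≤ q) :
    gaussian1 (Set.Icc p q) ≤ gaussian1 (Set.Icc (-((q - p) / 2)) ((q - p) / 2)) := by
  rw [← ENNReal.toReal_le_toReal (measure_ne_top _ _) (measure_ne_top _ _), ← measureReal_def,
    ← measureReal_def, gaussian1_real_Icc hpq, gaussian1_real_Icc (by linarith)]
  have := Phi_interval_le (h := (q - p) / 2) (by linarith) ((p + q) / 2)
  ring_nf at this ⊢
  exact this

/-- Mass beyond the quartile point `τ` is paired with mass before it by reflection at `τ`. The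
reflection increases the density `gphi`, so that the excess of `f` over `f (2 * τ)` has integral
at most that of a constant. -/
lemma quartile_integral_le {f : ℝ → ℝ} {τ : ℝ} (hm : Measurable f) (h0 : ∀ r, 0 ≤ f r)
    (h1 : ∀ r, f r ≤ 1) (heven : ∀ r, f (-r) = f r) (hanti : AntitoneOn f (Set.Ici 0))
    (hτ : 0 < τ) (hΦ : Phi τ - Phi (-τ) = 1 / 2)
    (hf : ∀ q ∈ Set.Icc 0 τ, f (τ - q) + f (τ + q) ≤ 1) :
    ∫ r, f r * gphi r ≤ 1 / 2 := by
  have hint : Integrable fun r => f r * gphi r :=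
    gphi_integrable.bdd_mul hm.aestronglyMeasurable
      (Filter.Eventually.of_forall fun r => by
        rw [Real.norm_of_nonneg (h0 r)]; exact h1 r)
  have habs : ∀ r, f |r| * gphi |r| = f r * gphi r := fun r => by
    rcases abs_choice r with h | h <;> rw [h]
    rw [heven, gphi_neg]
  have hsym : ∫ r, f r * gphi r = 2 * ∫ r in Set.Ioi 0, f r * gphi r := by
    rw [← integral_comp_abs (f := fun r => f r * gphi r)]
    simp only [habs]
  set b := f (2 * τ) with hb
  have hΦτ : ∫ r in (0 : ℝ)..τ, gphi r = 1 / 4 := by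
    have : ∫ r in (0 : ℝ)..τ, gphi r = Phi τ - Phi 0 := by
      rw [← intervalIntegral.integral_Iic_sub_Iic gphi_integrable.integrableOn
        gphi_integrable.integrableOn]; rfl
    rw [this, Phi_zero]
    rw [Phi_neg] at hΦ
    linarith
  have hφ0 : ∫ r in Set.Ioi (0 : ℝ), gphi r = 1 / 2 := by
    have := intervalIntegral.integral_Iic_add_Ioi (b := (0 : ℝ)) gphi_integrable.integrableOn
      gphi_integrable.integrableOn
    have h2 : ∫ r, gphi r = 1 := by
      have := gaussian1_real Set.univ
      simpa using this.symm
    have h3 : ∫ r in Set.Iic (0 : ℝ), gphi r = 1 / 2 := Phi_zero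
    linarith
  -- the excess of `f` over `b`
  set g : ℝ → ℝ := fun r => (f r - b) * gphi r with hg
  have hgint : Integrable g := by
    have : g = fun r => f r * gphi r - b * gphi r := by ext r; simp only [hg]; ring
    rw [this]
    exact hint.sub (gphi_integrable.const_mul b)
  have hII : ∀ x y : ℝ, IntervalIntegrable g volume x y := fun x y => hgint.intervalIntegrable
  have hsplit : ∫ r in Set.Ioi 0, f r * gphi r = (∫ r in Set.Ioi 0, g r) + b / 2 := by
    have : ∀ r, f r * gphi r = g r + b * gphi r := fun r => by simp only [hg]; ring
    simp only [this]
    rw [integral_add hgint.integrableOn (gphi_integrable.const_mul b).integrableOn,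
      integral_const_mul, hφ0]
    ring
  have htail : ∫ r in Set.Ioi (2 * τ), g r ≤ 0 := by
    refine setIntegral_nonpos measurableSet_Ioi fun r hr => ?_
    have hr' : 2 * τ < r := hr
    have : f r ≤ b := hanti (Set.mem_Ici.2 (by linarith)) (Set.mem_Ici.2 (by linarith)) hr'.le
    exact mul_nonpos_of_nonpos_of_nonneg (by linarith) (gphi_pos _).le
  have hrefl : ∫ r in τ..(2 * τ), g r = ∫ r in (0 : ℝ)..τ, g (2 * τ - r) := by
    rw [intervalIntegral.integral_comp_sub_left (fun r => g r) (2 * τ)]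
    congr 1 <;> ring
  have hhead : ∫ r in (0 : ℝ)..(2 * τ), g r ≤ (1 - 2 * b) / 4 := by
    have hII' : IntervalIntegrable (fun r => g (2 * τ - r)) volume 0 τ := by
      have := (hII (2 * τ) τ).comp_sub_left (2 * τ)
      ring_nf at this ⊢
      exact this
    rw [← intervalIntegral.integral_add_adjacent_intervals (hII 0 τ) (hII τ (2 * τ)), hrefl,
      ← intervalIntegral.integral_add (hII 0 τ) hII']
    calc ∫ r in (0 : ℝ)..τ, (g r + g (2 * τ - r)) ≤ ∫ r in (0 : ℝ)..τ, (1 - 2 * b) * gphi r := by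
          refine intervalIntegral.integral_mono_on hτ.le ((hII 0 τ).add hII')
            (gphi_integrable.const_mul _).intervalIntegrable fun r hr => ?_
          have e1 : gphi (2 * τ - r) ≤ gphi r := gphi_le (by
            rw [abs_of_nonneg hr.1, abs_of_nonneg (by linarith [hr.2])]; linarith [hr.2])
          have e2 : b ≤ f (2 * τ - r) := hanti (Set.mem_Ici.2 (by linarith [hr.2]))
            (Set.mem_Ici.2 (by linarith)) (by linarith [hr.1])
          have e3 := hf (τ - r) ⟨by linarith [hr.2], by linarith [hr.1]⟩
          rw [show τ - (τ - r) = r by ring, show τ + (τ - r) = 2 * τ - r by ring] at e3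
          have e4 := gphi_pos r
          simp only [hg]
          calc (f r - b) * gphi r + (f (2 * τ - r) - b) * gphi (2 * τ - r)
              ≤ (f r - b) * gphi r + (f (2 * τ - r) - b) * gphi r := by
                gcongr
            _ = (f r + f (2 * τ - r) - 2 * b) * gphi r := by ring
            _ ≤ (1 - 2 * b) * gphi r := by gcongr
      _ = (1 - 2 * b) / 4 := by rw [intervalIntegral.integral_const_mul, hΦτ]; ring
  have hIoi : ∫ r in Set.Ioi 0, g r
      = (∫ r in (0 : ℝ)..(2 * τ), g r) + ∫ r in Set.Ioi (2 * τ), g r :=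
    (intervalIntegral.integral_interval_add_Ioi hgint.integrableOn hgint.integrableOn).symm
  rw [hsym, hsplit, hIoi]
  linarith

/-- The points `y` above which the section of `W` contains two points at distance `s`. -/
def shiftProj {n : ℕ} (W : Set (ℝ × EuclideanSpace ℝ (Fin n))) (s : ℝ) :
    Set (EuclideanSpace ℝ (Fin n)) := {y | ∃ t : ℝ, (t, y) ∈ W ∧ (t + s, y) ∈ W}

section shiftProj

variable {n : ℕ} {W : Set (ℝ × EuclideanSpace ℝ (Fin n))}

lemma shiftProj_neg (s : ℝ) : shiftProj W (-s) = shiftProj W s := by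
  ext y
  constructor
  · rintro ⟨t, h1, h2⟩
    exact ⟨t + -s, h2, by simpa using h1⟩
  · rintro ⟨t, h1, h2⟩
    exact ⟨t + s, h2, by simpa using h1⟩

lemma section_mem (hW : Convex ℝ W) {y : EuclideanSpace ℝ (Fin n)} {p q t : ℝ} (hp : (p, y) ∈ W)
    (hq : (q, y) ∈ W) (ht : t ∈ Set.Icc p q) : (t, y) ∈ W := by
  have hs : Convex ℝ {t : ℝ | (t, y) ∈ W} := by
    intro a ha b hb α β hα hβ hαβ
    have := hW ha hb hα hβ hαβ
    simpa [← add_smul, hαβ] using this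
  exact hs.ordConnected.out hp hq ht

lemma shiftProj_anti (hW : Convex ℝ W) {s s' : ℝ} (hs : 0 ≤ s) (hss : s ≤ s') :
    shiftProj W s' ⊆ shiftProj W s := by
  rintro y ⟨t, h1, h2⟩
  exact ⟨t, h1, section_mem hW h1 h2 ⟨by linarith, by linarith⟩⟩

lemma shiftProj_convex (hW : Convex ℝ W) (s : ℝ) : Convex ℝ (shiftProj W s) := by
  rintro x ⟨t, h1, h2⟩ y ⟨t', h1', h2'⟩ α β hα hβ hαβ
  refine ⟨α * t + β * t', ?_, ?_⟩
  · simpa using hW h1 h1' hα hβ hαβ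
  · have := hW h2 h2' hα hβ hαβ
    have e : α * t + β * t' + s = α * (t + s) + β * (t' + s) := by
      linear_combination (-s) * hαβ
    simpa [e] using this

lemma shiftProj_midpoint (hW : Convex ℝ W) {s s' σ : ℝ} (hσ : s + s' = 2 * σ) :
    ∀ x ∈ shiftProj W s, ∀ y ∈ shiftProj W s', (1 / 2 : ℝ) • (x + y) ∈ shiftProj W σ := by
  rintro x ⟨t, h1, h2⟩ y ⟨t', h1', h2'⟩
  have k1 := hW h1 h1' (by norm_num : (0 : ℝ) ≤ 1 / 2) (by norm_num : (0 : ℝ) ≤ 1 / 2) (by norm_num)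
  have k2 := hW h2 h2' (by norm_num : (0 : ℝ) ≤ 1 / 2) (by norm_num : (0 : ℝ) ≤ 1 / 2) (by norm_num)
  refine ⟨1 / 2 * t + 1 / 2 * t', ?_, ?_⟩
  · simpa [smul_add] using k1
  · have e : 1 / 2 * t + 1 / 2 * t' + σ = 1 / 2 * (t + s) + 1 / 2 * (t' + s') := by
      linear_combination (-1 / 2) * hσ
    rw [e]
    simpa [smul_add] using k2

/-- The set of all `(s, y)` with `y ∈ shiftProj W s`. -/
lemma shiftProj_total_compact (hW : IsCompact W) :
    IsCompact {p : ℝ × EuclideanSpace ℝ (Fin n) | p.2 ∈ shiftProj W p.1} := by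
  have hc : IsCompact ((W ×ˢ W) ∩ {q | q.1.2 = q.2.2}) :=
    (hW.prod hW).inter_right (isClosed_eq (by fun_prop) (by fun_prop))
  have := hc.image (f := fun q : (ℝ × EuclideanSpace ℝ (Fin n)) × (ℝ × EuclideanSpace ℝ (Fin n)) =>
    (q.2.1 - q.1.1, q.1.2)) (by fun_prop)
  convert this using 1
  ext ⟨s, y⟩
  constructor
  · rintro ⟨t, h1, h2⟩
    exact ⟨((t, y), (t + s, y)), ⟨⟨h1, h2⟩, rfl⟩, by simp⟩
  · rintro ⟨⟨⟨t, x⟩, ⟨t', x'⟩⟩, ⟨⟨h1, h2⟩, h3⟩, h4⟩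
    simp only [Prod.mk.injEq, Set.mem_ofPred_eq] at h1 h2 h3 h4
    obtain ⟨rfl, rfl⟩ := h4
    subst h3
    exact ⟨t, h1, by simpa using h2⟩

lemma shiftProj_compact (hW : IsCompact W) (s : ℝ) : IsCompact (shiftProj W s) := by
  have hc := (shiftProj_total_compact hW).inter_right
    (isClosed_eq continuous_fst (continuous_const (y := s)))
  convert hc.image continuous_snd using 1
  ext y
  simp

/-- If `W` has measure greater than `1 / 2`, so has the set of points above which the section of `W`
has length at least `θ`. -/
theorem shiftProj_measure {θ : ℝ} (hθpos : 0 < θ)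
    (hθ : gaussian1 (Set.Icc (-(θ / 2)) (θ / 2)) = 1 / 2)
    (hWc : IsCompact W) (hW : Convex ℝ W)
    (h : 1 / 2 < (gaussian1.prod (stdGaussian n)).real W) :
    1 / 2 < (stdGaussian n).real (shiftProj W θ) := by
  by_contra hcon
  rw [not_lt] at hcon
  set f : ℝ → ℝ := fun r => (stdGaussian n).real (shiftProj W (2 * r)) with hf
  have hD : MeasurableSet {p : ℝ × EuclideanSpace ℝ (Fin n) | p.2 ∈ shiftProj W (2 * p.1)} :=
    ((shiftProj_total_compact hWc).isClosed.preimage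
      (f := fun p : ℝ × EuclideanSpace ℝ (Fin n) => (2 * p.1, p.2)) (by fun_prop)).measurableSet
  have hfm' : Measurable fun r => stdGaussian n (shiftProj W (2 * r)) :=
    measurable_measure_prodMk_left hD
  have hfm : Measurable f := hfm'.ennreal_toReal
  have hτ : Phi (θ / 2) - Phi (-(θ / 2)) = 1 / 2 := by
    rw [← gaussian1_real_Icc (by linarith), measureReal_def, hθ]; simp
  have hle : ∫ r, f r * gphi r ≤ 1 / 2 := by
    refine quartile_integral_le (τ := θ / 2) hfm (fun r => measureReal_nonneg)
      (fun r => measureReal_le_one) (fun r => ?_) (fun r hr r' hr' hrr => ?_) (by linarith) hτ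
      fun q hq => ?_
    · simp only [hf, mul_neg, shiftProj_neg]
    · have : (0 : ℝ) ≤ r := hr
      exact measureReal_mono (shiftProj_anti hW (by linarith) (by linarith))
    · by_contra hlt
      rw [not_le] at hlt
      exact absurd (ehrhard_half (shiftProj_compact hWc _) (shiftProj_compact hWc _)
        (shiftProj_compact hWc θ) (shiftProj_midpoint hW (by ring)) hlt) (not_lt.2 hcon)
  -- sections are compared with centred intervals of the same length
  have hWD : (gaussian1.prod (stdGaussian n)) W ≤ (gaussian1.prod (stdGaussian n))
      {p : ℝ × EuclideanSpace ℝ (Fin n) | p.2 ∈ shiftProj W (2 * p.1)} := by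
    rw [Measure.prod_apply_symm hWc.isClosed.measurableSet, Measure.prod_apply_symm hD]
    refine lintegral_mono fun y => ?_
    have hsc : IsCompact ((fun t : ℝ => (t, y)) ⁻¹' W) := by
      have : (fun t : ℝ => (t, y)) ⁻¹' W = Prod.fst '' (W ∩ {p | p.2 = y}) := by
        ext t; simp
      rw [this]
      exact (hWc.inter_right (isClosed_eq continuous_snd continuous_const)).image continuous_fst
    rcases Set.eq_empty_or_nonempty ((fun t : ℝ => (t, y)) ⁻¹' W) with he | hne
    · rw [he]; simp
    obtain ⟨p, hp, hpl⟩ := hsc.exists_isLeast hne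
    obtain ⟨q, hq, hql⟩ := hsc.exists_isGreatest hne
    have hpq : p ≤ q := hpl hq
    calc gaussian1 ((fun t : ℝ => (t, y)) ⁻¹' W) ≤ gaussian1 (Set.Icc p q) :=
          measure_mono fun t ht => ⟨hpl ht, hql ht⟩
      _ ≤ _ := gaussian1_Icc_le hpq
      _ ≤ _ := measure_mono fun r hr => ?_
    obtain ⟨hr1, hr2⟩ := hr
    change y ∈ shiftProj W (2 * r)
    have hmem : ∀ r, 0 ≤ r → r ≤ (q - p) / 2 → y ∈ shiftProj W (2 * r) := fun r h0 h1 =>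
      ⟨p, hp, section_mem hW hp hq ⟨by linarith, by linarith⟩⟩
    rcases le_total 0 r with h0 | h0
    · exact hmem r h0 hr2
    · rw [← shiftProj_neg, ← mul_neg]
      exact hmem (-r) (by linarith) (by linarith)
  have hDr : (gaussian1.prod (stdGaussian n)).real
      {p : ℝ × EuclideanSpace ℝ (Fin n) | p.2 ∈ shiftProj W (2 * p.1)} = ∫ r, f r * gphi r := by
    rw [measureReal_def, Measure.prod_apply hD]
    have e1 : ∫ r, f r ∂gaussian1
        = (∫⁻ r, stdGaussian n (shiftProj W (2 * r)) ∂gaussian1).toReal :=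
      integral_toReal hfm'.aemeasurable (Filter.Eventually.of_forall fun _ => measure_lt_top _ _)
    refine e1.symm.trans ?_
    rw [gaussian1_eq, ProbabilityTheory.integral_gaussianReal_eq_integral_smul one_ne_zero,
      gphi_eq_pdf]
    simp [mul_comm]
  have hfin := ENNReal.toReal_mono (measure_ne_top _ _) hWD
  rw [← measureReal_def, ← measureReal_def, hDr] at hfin
  linarith

end shiftProj

/-! ### Covering cosets, by induction on the dimension -/

/-- The radial profile of the density of `stdGaussian n`, with values in `ENNReal`. -/
noncomputable def gdens (n : ℕ) (r : ℝ) : ENNReal :=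
  ENNReal.ofReal ((2 * π) ^ (-(n : ℝ) / 2) * Real.exp (-r ^ 2 / 2))

lemma gdens_mul (n : ℕ) {r a b : ℝ} (h : r ^ 2 = a ^ 2 + b ^ 2) :
    gdens (n + 1) r = gdens 1 a * gdens n b := by
  unfold gdens
  rw [← ENNReal.ofReal_mul (by positivity)]
  congr 1
  have h1 : ((2 * π) ^ (-((n + 1 : ℕ) : ℝ) / 2) : ℝ)
      = (2 * π) ^ (-((1 : ℕ) : ℝ) / 2) * (2 * π) ^ (-(n : ℝ) / 2) := by
    rw [← Real.rpow_add (by positivity)]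
    congr 1
    push_cast
    ring
  have h2 : Real.exp (-r ^ 2 / 2) = Real.exp (-a ^ 2 / 2) * Real.exp (-b ^ 2 / 2) := by
    rw [← Real.exp_add]
    congr 1
    linarith
  rw [h1, h2]
  ring

/-- Splitting off the first coordinate. -/
noncomputable def splitFirst (n : ℕ) :
    EuclideanSpace ℝ (Fin (n + 1)) ≃ₗ[ℝ] ℝ × EuclideanSpace ℝ (Fin n) where
  toFun x := (x 0, WithLp.toLp 2 fun i => x i.succ)
  map_add' x y := by ext <;> simp
  map_smul' c x := by ext <;> simp
  invFun p := WithLp.toLp 2 (Fin.cons p.1 p.2.ofLp)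
  left_inv x := by
    ext i
    refine Fin.cases ?_ (fun j => ?_) i <;> simp
  right_inv p := by ext <;> simp

lemma splitFirst_norm (n : ℕ) (x : EuclideanSpace ℝ (Fin (n + 1))) :
    ‖x‖ ^ 2 = (splitFirst n x).1 ^ 2 + ‖(splitFirst n x).2‖ ^ 2 := by
  rw [EuclideanSpace.norm_sq_eq, EuclideanSpace.norm_sq_eq, Fin.sum_univ_succ]
  simp [splitFirst]

lemma splitFirst_measurePreserving (n : ℕ) :
    MeasurePreserving (splitFirst n) volume (volume.prod volume) := by
  have h1 := EuclideanSpace.volume_preserving_symm_measurableEquiv_toLp (Fin (n + 1))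
  have h2 := volume_preserving_piFinSuccAbove (fun _ : Fin (n + 1) => ℝ) 0
  have h3 := (MeasurePreserving.id (volume : Measure ℝ)).prod
    (PiLp.volume_preserving_toLp (Fin n))
  exact h3.comp (h2.comp h1)

/-- A rotation taking `u` to the first axis splits the Gaussian measure as a product. -/
lemma exists_split {n : ℕ} {u : EuclideanSpace ℝ (Fin (n + 1))} (hu : u ≠ 0) :
    ∃ L : EuclideanSpace ℝ (Fin (n + 1)) ≃L[ℝ] ℝ × EuclideanSpace ℝ (Fin n),
      L u = (‖u‖, 0) ∧ (∀ x, ‖(L x).2‖ ≤ ‖x‖) ∧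
      MeasurePreserving L (stdGaussian (n + 1)) (gaussian1.prod (stdGaussian n)) := by
  have hu' : ‖u‖ ≠ 0 := norm_ne_zero_iff.2 hu
  obtain ⟨ob, hob⟩ := Orthonormal.exists_orthonormalBasis_extension_of_card_eq (𝕜 := ℝ)
    (E := EuclideanSpace ℝ (Fin (n + 1))) (ι := Fin (n + 1)) (by simp)
    (v := fun _ => (‖u‖)⁻¹ • u) (s := {0}) (by
      rw [orthonormal_iff_ite]
      rintro ⟨i, hi⟩ ⟨j, hj⟩
      have hij : (⟨i, hi⟩ : ({0} : Set (Fin (n + 1)))) = ⟨j, hj⟩ :=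
        Subtype.ext (hi.trans hj.symm)
      rw [if_pos hij]
      simp only [Set.domRestrict_apply, real_inner_self_eq_norm_sq, norm_smul, norm_inv, norm_norm]
      field_simp)
  have h0 : ob 0 = (‖u‖)⁻¹ • u := hob 0 rfl
  have hur : ob.repr u = ‖u‖ • EuclideanSpace.single 0 1 := by
    rw [← ob.repr_self, ← map_smul, h0, smul_smul, mul_inv_cancel₀ hu', one_smul]
  set L : EuclideanSpace ℝ (Fin (n + 1)) ≃L[ℝ] ℝ × EuclideanSpace ℝ (Fin n) :=
    (ob.repr.toLinearEquiv.trans (splitFirst n)).toContinuousLinearEquiv with hL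
  have hLx : ∀ x, L x = splitFirst n (ob.repr x) := fun x => rfl
  have hnorm : ∀ x, ‖x‖ ^ 2 = (L x).1 ^ 2 + ‖(L x).2‖ ^ 2 := fun x => by
    rw [hLx, ← splitFirst_norm, LinearIsometryEquiv.norm_map]
  refine ⟨L, ?_, fun x => ?_, ⟨L.continuous.measurable, ?_⟩⟩
  · rw [hLx, hur]
    ext <;> simp [splitFirst]
  · refine abs_le_of_sq_le_sq' ?_ (norm_nonneg _) |>.2
    rw [hnorm x]; nlinarith [sq_nonneg (L x).1]
  · have hmp : MeasurePreserving L volume (volume.prod volume) :=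
      (splitFirst_measurePreserving n).comp ob.repr.measurePreserving
    have hmeas : ∀ k, Measurable (gdens k) := fun k => by unfold gdens; fun_prop
    have e1 : gaussian1 = volume.withDensity (gdens 1) := by
      unfold gaussian1 gdens; simp
    have e2 : ∀ k, stdGaussian k = volume.withDensity fun x => gdens k ‖x‖ := fun k => rfl
    rw [e1, e2, e2, prod_withDensity (f := gdens 1) (g := fun x => gdens n ‖x‖) (hmeas 1)
      ((hmeas n).comp measurable_norm)]
    have hg : Measurable fun p : ℝ × EuclideanSpace ℝ (Fin n) => gdens 1 p.1 * gdens n ‖p.2‖ :=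
      ((hmeas 1).comp measurable_fst).mul
        (((hmeas n).comp measurable_norm).comp measurable_snd)
    ext S hS
    rw [Measure.map_apply L.continuous.measurable hS,
      withDensity_apply _ (L.continuous.measurable hS), withDensity_apply _ hS,
      ← hmp.setLIntegral_comp_preimage hS hg]
    refine lintegral_congr fun x => ?_
    exact gdens_mul n (hnorm x)

/-- A compact convex set of Gaussian measure more than `1 / 2` meets every coset of a subgroup
generated by a spanning set of vectors of norm at most `θ`. -/
theorem meets_coset {θ : ℝ} (hθpos : 0 < θ)
    (hθ : gaussian1 (Set.Icc (-(θ / 2)) (θ / 2)) = 1 / 2) (n : ℕ) :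
    ∀ (V S : Set (EuclideanSpace ℝ (Fin n))), IsCompact V → Convex ℝ V →
      1 / 2 < (stdGaussian n).real V → (∀ u ∈ S, ‖u‖ ≤ θ) → Submodule.span ℝ S = ⊤ →
      ∀ x, ∃ z ∈ AddSubgroup.closure S, x + z ∈ V := by
  induction n with
  | zero =>
    intro V S _ _ hV _ _ x
    refine ⟨0, zero_mem _, ?_⟩
    by_contra hx
    have : V = ∅ := Set.eq_empty_of_forall_notMem fun y hy => hx (by
      rwa [Subsingleton.elim (x + 0) y])
    rw [this] at hV
    norm_num at hV
  | succ n ih =>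
    intro V S hVc hVconv hV hS hspan x
    obtain ⟨u, huS, hu⟩ : ∃ u ∈ S, u ≠ 0 := by
      by_contra! hcon
      have : Submodule.span ℝ S = ⊥ := Submodule.span_eq_bot.2 hcon
      rw [this] at hspan
      exact bot_ne_top hspan
    obtain ⟨L, hLu, hLn, hLm⟩ := exists_split hu
    have hup : 0 < ‖u‖ := norm_pos_iff.2 hu
    set W := L '' V with hW
    have hWc : IsCompact W := hVc.image L.continuous
    have hWconv : Convex ℝ W := hVconv.linear_image L.toLinearEquiv.toLinearMap
    have hWm : 1 / 2 < (gaussian1.prod (stdGaussian n)).real W := by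
      rw [measureReal_def, ← hLm.measure_preimage hWc.isClosed.measurableSet.nullMeasurableSet,
        Set.preimage_image_eq _ L.injective]
      exact hV
    have hV' : 1 / 2 < (stdGaussian n).real (shiftProj W ‖u‖) :=
      (shiftProj_measure hθpos hθ hWc hWconv hWm).trans_le
        (measureReal_mono (shiftProj_anti hWconv hup.le (hS u huS)))
    let π₂ : EuclideanSpace ℝ (Fin (n + 1)) →ₗ[ℝ] EuclideanSpace ℝ (Fin n) :=
      (LinearMap.snd ℝ ℝ _).comp L.toLinearEquiv.toLinearMap
    have hπ : ∀ x, π₂ x = (L x).2 := fun x => rfl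
    have hspan' : Submodule.span ℝ (π₂ '' S) = ⊤ := by
      rw [Submodule.span_image, hspan, Submodule.map_top, LinearMap.range_eq_top]
      intro y
      exact ⟨L.symm (0, y), by simp [hπ]⟩
    obtain ⟨z', hz', t, ht1, ht2⟩ := ih (shiftProj W ‖u‖) (π₂ '' S) (shiftProj_compact hWc _)
      (shiftProj_convex hWconv _) hV' (by
        rintro _ ⟨v, hv, rfl⟩
        exact (hLn v).trans (hS v hv)) hspan' (π₂ x)
    rw [← LinearMap.toAddMonoidHom_coe, ← AddMonoidHom.map_closure] at hz'
    obtain ⟨z, hz, hzz⟩ := hz'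
    obtain rfl : π₂ z = z' := hzz
    rw [← map_add] at ht1 ht2
    -- a suitable integer multiple of `u` brings the first coordinate into `[t, t + ‖u‖]`
    set k : ℤ := ⌈(t - (L (x + z)).1) / ‖u‖⌉ with hk
    refine ⟨z + k • u, add_mem hz (zsmul_mem (AddSubgroup.subset_closure huS) k), ?_⟩
    have hk1 : t ≤ (L (x + z)).1 + k * ‖u‖ := by
      have := Int.le_ceil ((t - (L (x + z)).1) / ‖u‖)
      rw [div_le_iff₀ hup] at this
      linarith
    have hk2 : (L (x + z)).1 + k * ‖u‖ ≤ t + ‖u‖ := by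
      have := (Int.ceil_lt_add_one ((t - (L (x + z)).1) / ‖u‖)).le
      rw [← hk, ← sub_le_iff_le_add, le_div_iff₀ hup] at this
      linarith
    have hmem := section_mem hWconv ht1 ht2 ⟨hk1, hk2⟩
    have hLeq : L (x + (z + k • u)) = ((L (x + z)).1 + k * ‖u‖, π₂ (x + z)) := by
      rw [← add_assoc, map_add, map_zsmul, hLu]
      ext <;> simp [hπ]
    have : L (x + (z + k • u)) ∈ L '' V := by rw [hLeq]; exact hmem
    obtain ⟨v, hv, hvx⟩ := this
    rwa [← L.injective hvx]

/-! ### The covering radius -/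

lemma stdGaussian_pos_of_isOpen {n : ℕ} {U : Set (EuclideanSpace ℝ (Fin n))} (hU : IsOpen U)
    (hne : U.Nonempty) : 0 < stdGaussian n U := by
  have hac : (volume : Measure (EuclideanSpace ℝ (Fin n))) ≪ stdGaussian n := by
    unfold stdGaussian
    refine withDensity_absolutelyContinuous' (by fun_prop)
      (Filter.Eventually.of_forall fun x => ?_)
    rw [← pos_iff_ne_zero, ENNReal.ofReal_pos]
    positivity
  rw [pos_iff_ne_zero]
  exact fun h => (hU.measure_pos volume hne).ne' (hac h)

/-- A dilation of `V` has strictly larger Gaussian measure, and the excess allows a truncation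
to a compact set. -/
lemma exists_compact_subset_dilate {n : ℕ} {V : Set (EuclideanSpace ℝ (Fin n))} (hVclosed : IsClosed V)
    (hVconv : Convex ℝ V) (hV0 : 0 ∈ interior V) (hV : stdGaussian n V ≥ 1 / 2)
    {δ : ℝ} (hδ : 0 < δ) :
    ∃ K : Set (EuclideanSpace ℝ (Fin n)), IsCompact K ∧ Convex ℝ K ∧ K ⊆ (1 + δ) • V ∧
      1 / 2 < (stdGaussian n).real K := by
  have hδ1 : 0 < 1 + δ := by linarith
  have hV0' : (0 : EuclideanSpace ℝ (Fin n)) ∈ V := interior_subset hV0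
  have hVr : 1 / 2 ≤ (stdGaussian n).real V := by
    have := ENNReal.toReal_mono (measure_ne_top _ _) hV
    simpa [measureReal_def] using this
  have hsub : V ⊆ (1 + δ) • V := fun v hv => by
    rw [Set.mem_smul_set_iff_inv_smul_mem₀ hδ1.ne']
    exact hVconv.smul_mem_of_zero_mem hV0' hv
      ⟨by positivity, inv_le_one_of_one_le₀ (by linarith)⟩
  have hlt : 1 / 2 < (stdGaussian n).real ((1 + δ) • V) := by
    rcases eq_or_ne V Set.univ with rfl | hne
    · have : (1 + δ) • (Set.univ : Set (EuclideanSpace ℝ (Fin n))) = Set.univ :=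
        Set.eq_univ_of_univ_subset hsub
      rw [this]
      norm_num
    obtain ⟨q, hq⟩ := nonempty_frontier_iff.2 ⟨⟨0, hV0'⟩, hne⟩
    have hqV : q ∈ V := hVclosed.frontier_subset hq
    obtain ⟨ρ, hρ, hball⟩ := Metric.isOpen_iff.1 isOpen_interior 0 hV0
    have hqball : Metric.ball q (δ * ρ) ⊆ (1 + δ) • V := fun y hy => by
      rw [Set.mem_smul_set_iff_inv_smul_mem₀ hδ1.ne']
      have hw : δ⁻¹ • (y - q) ∈ V := by
        refine interior_subset (hball ?_)
        rw [mem_ball_zero_iff, norm_smul, norm_inv, Real.norm_of_nonneg hδ.le,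
          inv_mul_lt_iff₀ hδ, ← dist_eq_norm]
        exact hy
      have := hVconv hqV hw (by positivity : 0 ≤ (1 + δ)⁻¹) (by positivity : 0 ≤ (1 + δ)⁻¹ * δ)
        (by field_simp)
      convert this using 1
      rw [smul_smul, mul_assoc, mul_inv_cancel₀ hδ.ne', mul_one, ← smul_add,
        add_sub_cancel]
    have hU : IsOpen (Metric.ball q (δ * ρ) \ V) := Metric.isOpen_ball.sdiff hVclosed
    have hUne : (Metric.ball q (δ * ρ) \ V).Nonempty := by
      by_contra hcon
      rw [Set.not_nonempty_iff_eq_empty, Set.sdiff_eq_empty] at hcon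
      exact hq.2 (mem_interior.2 ⟨_, hcon, Metric.isOpen_ball,
        Metric.mem_ball_self (by positivity)⟩)
    have hUpos : 0 < (stdGaussian n).real (Metric.ball q (δ * ρ) \ V) :=
      ENNReal.toReal_pos (stdGaussian_pos_of_isOpen hU hUne).ne' (measure_ne_top _ _)
    have hun : (stdGaussian n).real (V ∪ (Metric.ball q (δ * ρ) \ V))
        = (stdGaussian n).real V + (stdGaussian n).real (Metric.ball q (δ * ρ) \ V) :=
      measureReal_union Set.disjoint_sdiff_right hU.measurableSet
    have hle : (stdGaussian n).real (V ∪ (Metric.ball q (δ * ρ) \ V))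
        ≤ (stdGaussian n).real ((1 + δ) • V) :=
      measureReal_mono (Set.union_subset hsub (Set.sdiff_subset.trans hqball))
    linarith
  obtain ⟨R, hR⟩ := stdGaussian_tail (n := n) (sub_pos.2 hlt)
  refine ⟨Metric.closedBall 0 R ∩ (1 + δ) • V,
    (isCompact_closedBall 0 R).inter_right (hVclosed.smul₀ _),
    (convex_closedBall 0 R).inter (hVconv.smul _), Set.inter_subset_right, ?_⟩
  have hcover : (1 + δ) • V ⊆ (Metric.closedBall 0 R ∩ (1 + δ) • V) ∪ {z | R < ‖z‖} := by
    intro z hz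
    rcases le_or_gt ‖z‖ R with h | h
    · exact Or.inl ⟨by simpa using h, hz⟩
    · exact Or.inr h
  have := (measureReal_mono (μ := stdGaussian n) hcover).trans (measureReal_union_le _ _)
  linarith

/-- If the elements of `Λ` of norm at most `r` span, then `Λ` and `(r / θ) * (1 + δ)` times `V` cover
the space: `meets_coset` is applied after scaling by `θ / r`. -/
lemma mem_covRad_set {n : ℕ} {θ : ℝ} (hθpos : 0 < θ)
    (hθ : gaussian1 (Set.Icc (-(θ / 2)) (θ / 2)) = 1 / 2)
    {V : Set (EuclideanSpace ℝ (Fin n))} (hVclosed : IsClosed V) (hVconv : Convex ℝ V)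
    (hV0 : 0 ∈ interior V) (hV : stdGaussian n V ≥ 1 / 2)
    (Λ : AddSubgroup (EuclideanSpace ℝ (Fin n))) {r : ℝ} (hr : 0 < r)
    (hrank : Module.finrank ℝ (Submodule.span ℝ ((Λ : Set (EuclideanSpace ℝ (Fin n))) ∩
      r • Metric.closedBall (0 : EuclideanSpace ℝ (Fin n)) 1)) = n) {δ : ℝ} (hδ : 0 < δ) :
    (Λ : Set (EuclideanSpace ℝ (Fin n))) + (r / θ * (1 + δ)) • V = Set.univ := by
  obtain ⟨K, hKc, hKconv, hKsub, hK⟩ := exists_compact_subset_dilate hVclosed hVconv hV0 hV hδ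
  set S := (Λ : Set (EuclideanSpace ℝ (Fin n))) ∩
    r • Metric.closedBall (0 : EuclideanSpace ℝ (Fin n)) 1 with hS
  have hspan : Submodule.span ℝ S = ⊤ := Submodule.eq_top_of_finrank_eq (by simpa using hrank)
  have hc : θ / r ≠ 0 := (div_pos hθpos hr).ne'
  have hspan' : Submodule.span ℝ ((θ / r) • S) = ⊤ := by
    rw [Submodule.span_smul_eq_of_isUnit _ _ (IsUnit.mk0 _ hc), hspan]
  have hnorm : ∀ u ∈ (θ / r) • S, ‖u‖ ≤ θ := by
    rintro _ ⟨v, ⟨-, w, hw, rfl⟩, rfl⟩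
    have hw' : ‖w‖ ≤ 1 := by simpa using hw
    simp only [norm_smul]
    rw [Real.norm_of_nonneg (by positivity), Real.norm_of_nonneg hr.le, ← mul_assoc,
      div_mul_cancel₀ _ hr.ne']
    exact mul_le_of_le_one_right hθpos.le hw'
  have hΛ : ∀ z ∈ AddSubgroup.closure ((θ / r) • S), (r / θ) • z ∈ Λ := fun z hz => by
    induction hz using AddSubgroup.closure_induction with
    | mem y hy =>
      obtain ⟨v, hv, rfl⟩ := hy
      simp only [smul_smul]
      rw [div_mul_div_cancel₀ hθpos.ne', div_self hr.ne', one_smul]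
      exact hv.1
    | zero => simp
    | add a b _ _ ha hb => rw [smul_add]; exact add_mem ha hb
    | neg a _ ha => rw [smul_neg]; exact neg_mem ha
  refine Set.eq_univ_of_forall fun x => ?_
  obtain ⟨z, hz, hzK⟩ := meets_coset hθpos hθ n K ((θ / r) • S) hKc hKconv hK hnorm hspan'
    ((θ / r) • x)
  refine Set.mem_add.2 ⟨-((r / θ) • z), neg_mem (hΛ z hz), (r / θ) • ((θ / r) • x + z), ?_, ?_⟩
  · rw [mul_smul]
    exact Set.smul_mem_smul_set (hKsub hzK)
  · rw [smul_add, smul_smul, div_mul_div_cancel₀ hθpos.ne', div_self hr.ne', one_smul]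
    abel

lemma nthMin_set_nonempty {n : ℕ} {b : Fin n → EuclideanSpace ℝ (Fin n)}
    (hb : LinearIndependent ℝ b) :
    {r : ℝ | 0 < r ∧ Module.finrank ℝ (Submodule.span ℝ
      ((AddSubgroup.closure (Set.range b) : Set (EuclideanSpace ℝ (Fin n))) ∩
        r • Metric.closedBall (0 : EuclideanSpace ℝ (Fin n)) 1)) = n}.Nonempty := by
  have hsum : 0 ≤ ∑ i, ‖b i‖ := Finset.sum_nonneg fun i _ => norm_nonneg _
  refine ⟨1 + ∑ i, ‖b i‖, by linarith, ?_⟩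
  have htop : Submodule.span ℝ (Set.range b) = ⊤ :=
    hb.span_eq_top_of_card_eq_finrank' (by simp)
  have : Submodule.span ℝ
      ((AddSubgroup.closure (Set.range b) : Set (EuclideanSpace ℝ (Fin n))) ∩
        (1 + ∑ i, ‖b i‖) • Metric.closedBall (0 : EuclideanSpace ℝ (Fin n)) 1) = ⊤ := by
    refine eq_top_iff.2 (htop ▸ Submodule.span_mono ?_)
    rintro _ ⟨i, rfl⟩
    refine ⟨AddSubgroup.subset_closure ⟨i, rfl⟩, ?_⟩
    rw [smul_unitClosedBall_of_nonneg (by linarith), mem_closedBall_zero_iff]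
    have := Finset.single_le_sum (f := fun i => ‖b i‖) (fun i _ => norm_nonneg _)
      (Finset.mem_univ i)
    linarith
  rw [this, finrank_top]
  simp

theorem stmt_10 (n : ℕ) (θ : ℝ) (hθpos : 0 < θ)
    (hθ : gaussian1 (Set.Icc (-(θ / 2)) (θ / 2)) = 1 / 2)
    (V : Set (EuclideanSpace ℝ (Fin n))) (hVclosed : IsClosed V) (hVconv : Convex ℝ V)
    (hV0 : 0 ∈ interior V) (hV : stdGaussian n V ≥ 1 / 2)
    (b : Fin n → EuclideanSpace ℝ (Fin n)) (hb : LinearIndependent ℝ b) :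
    covRad n (AddSubgroup.closure (Set.range b)) V ≤
      θ⁻¹ * nthMin n (AddSubgroup.closure (Set.range b)) (Metric.closedBall 0 1) := by
  rw [le_inv_mul_iff₀ hθpos]
  refine le_csInf (nthMin_set_nonempty hb) fun r ⟨hr, hrank⟩ => ?_
  rw [← le_div_iff₀' hθpos]
  refine le_of_forall_pos_le_add fun ε hε => ?_
  -- the dilation factor for which the covering radius bound becomes `r / θ + ε`
  have hδ : 0 < ε / (r / θ) := by positivity
  refine csInf_le ⟨0, fun s hs => hs.1.le⟩ ⟨by positivity, ?_⟩
  have := mem_covRad_set hθpos hθ hVclosed hVconv hV0 hV _ hr hrank hδ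
  rwa [mul_add, mul_one, mul_div_cancel₀ _ (by positivity)] at this
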